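/- arXiv:math/0001068 — 3 statements merged into one kernel-verified Lean document; each statement's English description precedes it below -/
import Mathlib

section
/- Under the hypotheses of the preceding statement (𝒪 polynomial ring over a field of characteristic zero; 𝔥 ⊆ 𝔤 complete intersections of grades p, n; 𝒪/𝔤 reduced with connected Spec; localizations of 𝒪/𝔥 at minimal primes of 𝔤 regular; 𝔤 = (g₁,…,g_n) with g₁,…,g_n an 𝒪-regular sequence and generators h₁,…,h_p of 𝔥 with h_i ≡ Σ_{j=1}^p b_{ij} g_j mod 𝔤²), for every associated prime 𝔭 of 𝒪/𝔤 the images of g_{p+1},…,g_n in (𝒪/𝔥)_𝔭̄ form an (𝒪/𝔥)_𝔭̄-regular sequence and generate the localized ideal (𝔤/𝔥)_𝔭̄. -/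
open Ideal

/-- `ξ ∈ Der_h(O)`: the derivation `ξ` preserves the ideal `h`. -/
def PreservesIdeal {k O : Type*} [CommRing k] [CommRing O] [Algebra k O]
    (h : Ideal O) (xi : Derivation k O O) : Prop :=
  ∀ x ∈ h, xi x ∈ h

/-- The primitive ideal `∫_h g` of `g` relative to `h`: all `f ∈ g` such that
`ξ f ∈ g` for every derivation `ξ` preserving `h`. -/
def primitiveIdeal (k : Type*) {O : Type*} [CommRing k] [CommRing O] [Algebra k O]
    (h g : Ideal O) : Ideal O where
  carrier := {f | f ∈ g ∧ ∀ xi : Derivation k O O, PreservesIdeal h xi → xi f ∈ g}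
  add_mem' := fun {a b} ha hb =>
    ⟨g.add_mem ha.1 hb.1, fun xi hxi => by
      rw [map_add]; exact g.add_mem (ha.2 xi hxi) (hb.2 xi hxi)⟩
  zero_mem' := ⟨g.zero_mem, fun xi _ => by simp⟩
  smul_mem' := fun c f hf =>
    ⟨g.smul_mem c hf.1, fun xi hxi => by
      rw [smul_eq_mul, Derivation.leibniz]
      exact g.add_mem (g.smul_mem _ (hf.2 xi hxi))
        (by rw [smul_eq_mul]; exact Ideal.mul_mem_right _ g hf.1)⟩

/-- The set of elements of `g` whose class in the conormal module `M = g/(g² + h)` is a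
torsion element over `O/g`, i.e. is killed by a non-zero-divisor of `O/g`.  This is the
preimage in `O` of the torsion submodule `T(M)` of `M`. -/
def torsionSet {O : Type*} [CommRing O] (h g : Ideal O) : Set O :=
  {f | f ∈ g ∧ ∃ β : O,
    Ideal.Quotient.mk g β ∈ nonZeroDivisors (O ⧸ g) ∧ β * f ∈ g ^ 2 ⊔ h}

/-- A regular local ring: a noetherian local ring whose maximal ideal can be generated by
Krull-dimension many elements. -/
def IsRegularLocal (R : Type*) [CommRing R] : Prop :=
  IsNoetherianRing R ∧ IsLocalRing R ∧ ∃ s : Finset R,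
    (Ideal.span (s : Set R)).IsMaximal ∧ (s.card : WithBot ℕ∞) = ringKrullDim R

/-- The localization of `R` at a prime ideal (with the primality assumption explicit). -/
abbrev locAt {R : Type*} [CommRing R] (q : Ideal R) (hq : q.IsPrime) : Type _ :=
  @Localization.AtPrime R _ q hq

/-- The localization of `O/h` at the image of the prime `p` is a regular local ring. -/
def regularAtImage {O : Type*} [CommRing O] (h p : Ideal O) : Prop :=
  ∀ hP : (p.map (Ideal.Quotient.mk h)).IsPrime,
    IsRegularLocal (locAt (p.map (Ideal.Quotient.mk h)) hP)

/-- The `(t+1)`-st through `n`-th members `g_{t+1}, …, g_n` of a family `g_1, …, g_n`. -/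
def tailFam {O : Type*} {n : ℕ} (gs : Fin n → O) (t : ℕ) (j : Fin (n - t)) : O :=
  gs ⟨t + (j : ℕ), by have := j.isLt; omega⟩

/-- The images of `g_{t+1}, …, g_n` in the localization of `O/h` at the image of the
prime `p` form a regular sequence and generate the localization of `g/h` there, i.e. they
generate it as a complete intersection ideal. -/
def generatesAsCI {O : Type*} [CommRing O] (h g : Ideal O) {n : ℕ}
    (gs : Fin n → O) (t : ℕ) (p : Ideal O) : Prop :=
  ∀ hP : (p.map (Ideal.Quotient.mk h)).IsPrime,
    RingTheory.Sequence.IsRegular (locAt (p.map (Ideal.Quotient.mk h)) hP)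
      (List.ofFn fun j : Fin (n - t) =>
        algebraMap (O ⧸ h) (locAt (p.map (Ideal.Quotient.mk h)) hP)
          (Ideal.Quotient.mk h (tailFam gs t j))) ∧
    Ideal.span (Set.range fun j : Fin (n - t) =>
        algebraMap (O ⧸ h) (locAt (p.map (Ideal.Quotient.mk h)) hP)
          (Ideal.Quotient.mk h (tailFam gs t j))) =
      (g.map (Ideal.Quotient.mk h)).map
        (algebraMap (O ⧸ h) (locAt (p.map (Ideal.Quotient.mk h)) hP))

/-!
Localize at `P`, let `𝔪` be the maximal ideal of `A = R_P`, and suppose that `A/h` is regular.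
Since `dim A/h = dim A - p` is the embedding dimension of `A/h`, lifting a minimal system of
generators of its maximal ideal and adding `h₁, …, h_p` gives `dim A` generators of `𝔪`. These form
a basis of `𝔪/𝔪²`, so the `hᵢ` are linearly independent there and `hᵢ ≡ ∑ bᵢⱼ gⱼ` forces `(bᵢⱼ)`
to be invertible over `A`. By Nakayama `h₁, …, h_p, g_{p+1}, …, gₙ` then generate `g`. They are as
many as the regular sequence `g₁, …, gₙ`, hence a regular sequence themselves: in a Noetherian local
ring one generator at a time can be exchanged, as in Steinitz's lemma. Cutting by `h₁, …, h_p`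
leaves `g_{p+1}, …, gₙ` regular on `A/h`.
-/

open IsLocalRing RingTheory.Sequence

theorem ofList_ofFn {R : Type*} [CommRing R] {n : ℕ} (f : Fin n → R) :
    ofList (List.ofFn f) = span (Set.range f) := by
  rw [ofList]
  congr 1
  ext x
  simp [List.mem_ofFn]

theorem exists_ringKrullDim_eq_natCast (R : Type*) [CommRing R] [FiniteRingKrullDim R] :
    ∃ d : ℕ, ringKrullDim R = d := by
  obtain ⟨d, hd⟩ := WithBot.ne_bot_iff_exists.mp (ringKrullDim_ne_bot (R := R))
  have hd_top : d ≠ ⊤ := fun h => ringKrullDim_ne_top (R := R) (by rw [← hd, h]; rfl)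
  obtain ⟨n, rfl⟩ := ENat.ne_top_iff_exists.mp hd_top
  exact ⟨n, hd.symm⟩

theorem span_singleton_add_sup_of_mem {R : Type*} [CommRing R] (x : R) {z : R} {J : Ideal R}
    (hz : z ∈ J) : span {x + z} ⊔ J = span {x} ⊔ J := by
  have hzJ {w : R} : z ∈ span {w} ⊔ J := mem_sup_right hz
  refine le_antisymm (sup_le ?_ le_sup_right) (sup_le ?_ le_sup_right) <;>
    rw [span_singleton_le_iff_mem]
  · exact add_mem (mem_sup_left (mem_span_singleton_self x)) hzJ
  · simpa using sub_mem (mem_sup_left (mem_span_singleton_self (x + z))) hzJ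

theorem span_range_le_of_sub_sum_mem {R ι κ : Type*} [CommRing R] [Fintype κ] {x : ι → R}
    {y : κ → R} {c : ι → κ → R} {I : Ideal R} (hy : ∀ j, y j ∈ I)
    (hxy : ∀ i, x i - ∑ j, c i j * y j ∈ I) : span (Set.range x) ≤ I := by
  rw [span_le, Set.range_subset_iff]
  exact fun i => (Submodule.sub_mem_iff_left I (sum_mem fun j _ => I.mul_mem_left _ (hy j))).mp
    (hxy i)

theorem isRegular_append_iff_of_surjective {R S : Type*} [CommRing R] [CommRing S] {φ : R →+* S}
    (hφ : Function.Surjective φ) {xs : List R} (hker : RingHom.ker φ = ofList xs) (ys : List R) :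
    IsRegular R (xs ++ ys) ↔ IsWeaklyRegular R xs ∧ IsRegular S (ys.map φ) := by
  algebraize [φ]
  have hquot : IsWeaklyRegular (R ⧸ (ofList xs • ⊤ : Ideal R)) ys ↔
      IsWeaklyRegular S (ys.map φ) := by
    rw [← RingHom.algebraMap_toAlgebra φ, isWeaklyRegular_map_algebraMap_iff]
    exact ((Submodule.quotEquivOfEq _ (LinearMap.ker (Algebra.linearMap R S))
      (by ext x; simp [← hker, RingHom.algebraMap_toAlgebra])).trans
        ((Algebra.linearMap R S).quotKerEquivOfSurjective hφ)).isWeaklyRegular_congr ys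
  have htop : (⊤ : Ideal R) ≠ ofList (xs ++ ys) • ⊤ ↔
      (⊤ : Ideal S) ≠ ofList (ys.map φ) • ⊤ := by
    simp only [smul_eq_mul, mul_top, ← map_ofList, ofList_append]
    rw [ne_comm, ne_comm (a := ⊤), ← hker, sup_comm, ← comap_map_of_surjective' φ hφ, ne_eq,
      comap_eq_top_iff]
  rw [isRegular_iff, isRegular_iff, isWeaklyRegular_append_iff, hquot, htop, and_assoc]

section LocalRing

variable {A : Type*} [CommRing A] [IsLocalRing A]

theorem isUnit_of_sub_mem_sq {ι : Type*} [Fintype ι] [DecidableEq ι] {x y : ι → maximalIdeal A}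
    {M : Matrix ι ι A}
    (hx : LinearIndependent (ResidueField A) fun i => (maximalIdeal A).toCotangent (x i))
    (hxy : ∀ i, (x i : A) - ∑ j, M i j * y j ∈ maximalIdeal A ^ 2) : IsUnit M := by
  have hrow (i : ι) : Fintype.linearCombination (ResidueField A)
      (fun j => (maximalIdeal A).toCotangent (y j)) ((M.map (residue A)).row i) =
        (maximalIdeal A).toCotangent (x i) := by
    have hsum : (maximalIdeal A).toCotangent (∑ j, M i j • y j) =
        (maximalIdeal A).toCotangent (x i) := by
      rw [eq_comm, toCotangent_eq]
      simpa using hxy i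
    rw [← hsum]
    simp [Fintype.linearCombination_apply, ← ResidueField.algebraMap_eq]
  have hunit : IsUnit (M.map (residue A)) := by
    rw [← Matrix.linearIndependent_rows_iff_isUnit]
    refine .of_comp (Fintype.linearCombination (ResidueField A)
      fun j => (maximalIdeal A).toCotangent (y j)) ?_
    simpa only [Function.comp_def, hrow] using hx
  rw [Matrix.isUnit_iff_isUnit_det] at hunit ⊢
  rw [← RingHom.mapMatrix_apply, ← RingHom.map_det] at hunit
  exact isUnit_of_map_unit _ _ hunit

theorem mem_maximalIdeal_of_isRegular {xs : List A} (hxs : IsRegular A xs) {x : A} (hx : x ∈ xs) :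
    x ∈ maximalIdeal A := by
  refine le_maximalIdeal (J := ofList xs) ?_ (subset_span hx)
  simpa using hxs.top_ne_smul.symm

theorem exists_perm_cons_ofList_cons_eq {y : A} {xs : List A} (hy : y ∈ ofList xs)
    (hy' : y ∉ maximalIdeal A * ofList xs) :
    ∃ x rs, xs.Perm (x :: rs) ∧ ofList (y :: rs) = ofList xs := by
  induction xs generalizing y with
  | nil => simp_all
  | cons x xs ih =>
    obtain ⟨a, z, hz, rfl⟩ := mem_span_singleton_sup.mp (ofList_cons x xs ▸ hy)
    by_cases ha : IsUnit a
    · refine ⟨x, xs, .rfl, ?_⟩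
      rw [ofList_cons, ofList_cons, span_singleton_add_sup_of_mem _ hz,
        span_singleton_mul_left_unit ha]
    · have hax : a * x ∈ maximalIdeal A * ofList (x :: xs) :=
        mul_mem_mul ha (subset_span List.mem_cons_self)
      obtain ⟨x', rs, hperm, hrs⟩ := ih hz fun hz' => hy' (add_mem hax
        (mul_mono_right (span_mono fun _ => List.mem_cons_of_mem x) hz'))
      refine ⟨x', x :: rs, (hperm.cons x).trans (.swap x' x rs), ?_⟩
      have hax' : a * x ∈ ofList (x :: rs) := mul_mem_left _ a (subset_span List.mem_cons_self)
      rw [ofList_cons, add_comm, span_singleton_add_sup_of_mem _ hax', ofList_cons, sup_left_comm,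
        ← ofList_cons, hrs, ofList_cons]

variable [IsNoetherianRing A]

theorem linearIndependent_toCotangent_of_card_le {ι : Type*} [Fintype ι]
    {x : ι → maximalIdeal A} (hspan : Submodule.span A (Set.range x) = ⊤)
    (hcard : Fintype.card ι ≤ ringKrullDim A) :
    LinearIndependent (ResidueField A) fun i => (maximalIdeal A).toCotangent (x i) := by
  refine linearIndependent_of_top_le_span_of_card_le_finrank ?_ ?_
  · rw [Set.range_comp' (maximalIdeal A).toCotangent x,
      CotangentSpace.span_image_eq_top_iff.mpr hspan]
  · rw [← spanFinrank_maximalIdeal_eq_finrank_cotangentSpace]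
    exact_mod_cast hcard.trans (ringKrullDim_le_spanFinrank_maximalIdeal A)

theorem linearIndependent_toCotangent_of_span_eq_ker {ι : Type*} [Fintype ι] {B : Type*}
    [CommRing B] [IsRegularLocalRing B] {φ : A →+* B} (hφ : Function.Surjective φ)
    {x : ι → maximalIdeal A}
    (hx : span (Set.range fun i => (x i : A)) = RingHom.ker φ)
    (hdim : ringKrullDim B + Fintype.card ι ≤ ringKrullDim A) :
    LinearIndependent (ResidueField A) fun i => (maximalIdeal A).toCotangent (x i) := by
  obtain ⟨s, hscard, hs⟩ := Submodule.FG.exists_span_finset_card_eq_spanFinrank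
    (IsNoetherian.noetherian (maximalIdeal B))
  have hcomap : comap φ (maximalIdeal B) = maximalIdeal A :=
    IsLocalRing.eq_maximalIdeal (comap_isMaximal_of_surjective φ hφ)
  let lift := Function.surjInv hφ
  have hlift (z : B) : φ (lift z) = z := Function.surjInv_eq hφ z
  have hlift_mem (z : s) : lift z ∈ maximalIdeal A := by
    rw [← hcomap, mem_comap, hlift, ← hs]
    exact subset_span z.2
  let y (z : s) : maximalIdeal A := ⟨lift z, hlift_mem z⟩
  have hs_image : s = φ '' Set.range fun z : s => lift z := by
    rw [← Set.range_comp]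
    simp [Function.comp_def, hlift]
  have hmax : span (Set.range fun i => (x i : A)) ⊔ span (Set.range fun z => (y z : A)) =
      maximalIdeal A := by
    rw [hx, sup_comm, ← comap_map_of_surjective' φ hφ, Ideal.map_span, ← hs_image, ← hcomap, ← hs]
  have hspan : Submodule.span A (Set.range (Sum.elim x y)) = ⊤ := by
    apply Submodule.map_injective_of_injective (maximalIdeal A).subtype_injective
    rw [Submodule.map_span, Submodule.map_top, Submodule.range_subtype, Set.Sum.elim_range,
      Set.image_union, Submodule.span_union, ← Set.range_comp, ← Set.range_comp]
    exact hmax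
  refine (linearIndependent_toCotangent_of_card_le hspan ?_).comp _ Sum.inl_injective
  have hB := IsRegularLocalRing.spanFinrank_maximalIdeal (R := B)
  rwa [Fintype.card_sum, Fintype.card_coe, hscard, Nat.cast_add, hB, add_comm]

theorem span_range_sup_eq_of_sub_mem {ι : Type*} [Fintype ι] [DecidableEq ι] {x y : ι → A}
    {M : Matrix ι ι A} (hM : IsUnit M) {J : Ideal A}
    (hxy : ∀ i, x i - ∑ j, M i j * y j ∈ maximalIdeal A * (span (Set.range y) ⊔ J)) :
    span (Set.range x) ⊔ J = span (Set.range y) ⊔ J := by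
  set L := span (Set.range y) ⊔ J
  have hy (j : ι) : y j ∈ L := mem_sup_left (subset_span ⟨j, rfl⟩)
  refine le_antisymm
    (sup_le (span_range_le_of_sub_sum_mem hy fun i => mul_le_right (hxy i)) le_sup_right)
    (Submodule.le_of_le_smul_of_le_jacobson_bot (IsNoetherian.noetherian _)
      (maximalIdeal_le_jacobson _) (sup_le (span_le.mpr ?_) (le_sup_right.trans le_sup_left)))
  have hMy (i : ι) : M.mulVec y i ∈ span (Set.range x) ⊔ J ⊔ maximalIdeal A * L := by
    have hxi : x i ∈ span (Set.range x) ⊔ J ⊔ maximalIdeal A * L :=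
      mem_sup_left (mem_sup_left (subset_span ⟨i, rfl⟩))
    exact (Submodule.sub_mem_iff_right _ hxi).mp (mem_sup_right (hxy i))
  obtain ⟨N, hN⟩ := hM.exists_left_inv
  rintro _ ⟨j, rfl⟩
  have hNMy : y j = ∑ i, N j i * M.mulVec y i := by
    change y j = N.mulVec (M.mulVec y) j
    rw [Matrix.mulVec_mulVec, hN, Matrix.one_mulVec]
  rw [hNMy]
  exact sum_mem fun i _ => mul_mem_left _ _ (hMy i)

theorem isRegular_cons_of_mem_ofList_cons {x y : A} {rs : List A} (hreg : IsRegular A (x :: rs))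
    (hy : y ∈ maximalIdeal A) (hx : x ∈ ofList (y :: rs)) : IsRegular A (y :: rs) := by
  have hmem : ∀ r ∈ y :: rs, r ∈ maximalIdeal A := by
    rintro r (_ | ⟨_, hr⟩)
    · exact hy
    · exact mem_maximalIdeal_of_isRegular hreg (List.mem_cons_of_mem x hr)
  have hlast := (isRegular_of_perm hreg (List.perm_append_singleton x rs).symm).toIsWeaklyRegular
  rw [isWeaklyRegular_append_iff, isWeaklyRegular_singleton_iff] at hlast
  rw [ofList_cons, mem_span_singleton_sup] at hx
  obtain ⟨c, z, hz, rfl⟩ := hx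
  have hyreg : IsSMulRegular (A ⧸ (ofList rs • ⊤ : Ideal A)) y := by
    refine IsSMulRegular.of_mul (a := c) fun u v huv => hlast.2 ?_
    have hz0 (w : A ⧸ (ofList rs • ⊤ : Ideal A)) : z • w = 0 := by
      obtain ⟨w, rfl⟩ := Submodule.Quotient.mk_surjective _ w
      rw [← Submodule.Quotient.mk_smul, Submodule.Quotient.mk_eq_zero]
      exact Submodule.smul_mem_smul hz trivial
    simpa only [add_smul, hz0, add_zero] using huv
  refine .of_isWeaklyRegular_of_mem_maximalIdeal A hmem
    (isWeaklyRegular_of_perm_of_subset_maximalIdeal (rs := rs ++ [y]) ?_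
      (List.perm_append_singleton y rs) fun r hr => hmem r (by simpa [or_comm] using hr))
  exact (isWeaklyRegular_append_iff ..).mpr
    ⟨hlast.1, (isWeaklyRegular_singleton_iff ..).mpr hyreg⟩

theorem length_le_of_isRegular_of_ofList_eq {xs ys : List A} (hxs : IsRegular A xs)
    (hspan : ofList ys = ofList xs) : xs.length ≤ ys.length := by
  classical
  have hxdim := ringKrullDim_add_length_eq_ringKrullDim_of_isRegular xs hxs
  have hle : ofList ys ≤ maximalIdeal A :=
    hspan ▸ span_le.mpr fun x hx => mem_maximalIdeal_of_isRegular hxs hx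
  have hydim := ringKrullDim_le_ringKrullDim_quotient_add_card ys.toFinset fun y hy => by
    rw [ringJacobson_eq_maximalIdeal]
    exact hle (subset_span (by simpa using hy))
  have hys : span (ys.toFinset : Set A) = ofList ys := by simp [ofList]
  rw [hys, hspan, ← hxdim] at hydim
  have : Nontrivial (A ⧸ ofList xs) := Ideal.Quotient.nontrivial_iff.mpr
    (ne_top_of_le_ne_top (maximalIdeal.isMaximal A).ne_top (hspan ▸ hle))
  have : IsLocalRing (A ⧸ ofList xs) :=
    .of_surjective' (Ideal.Quotient.mk _) Ideal.Quotient.mk_surjective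
  obtain ⟨d, hd⟩ := exists_ringKrullDim_eq_natCast (A ⧸ ofList xs)
  rw [hd] at hydim
  exact (Nat.add_le_add_iff_left.mp (by exact_mod_cast hydim)).trans (List.toFinset_card_le ys)

theorem ofList_eq_of_ofList_cons_eq {y : A} {ys : List A} {I : Ideal A}
    (hspan : ofList (y :: ys) = I) (hy : y ∈ maximalIdeal A * I) : ofList ys = I := by
  rw [ofList_cons] at hspan
  refine le_antisymm (hspan ▸ le_sup_right) (Submodule.le_of_le_smul_of_le_jacobson_bot
    (IsNoetherian.noetherian _) (maximalIdeal_le_jacobson _) ?_)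
  calc
    I = ofList ys ⊔ span {y} := by rw [← hspan, sup_comm]
    _ ≤ ofList ys ⊔ maximalIdeal A * I :=
      sup_le_sup_left ((span_singleton_le_iff_mem _).mpr hy) _

theorem isRegular_of_ofList_eq {xs ys : List A} (hxs : IsRegular A xs)
    (hspan : ofList ys = ofList xs) (hlen : ys.length ≤ xs.length) : IsRegular A ys := by
  induction hn : ys.length generalizing A with
  | zero =>
    have := hxs.nontrivial
    exact List.length_eq_zero_iff.mp hn ▸ .nil A A
  | succ n ih =>
    obtain ⟨y, ys, rfl⟩ := List.exists_cons_of_length_eq_add_one hn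
    have hle : ofList xs ≤ maximalIdeal A :=
      span_le.mpr fun x hx => mem_maximalIdeal_of_isRegular hxs hx
    have hy : y ∈ ofList xs := hspan ▸ subset_span List.mem_cons_self
    have hy' : y ∉ maximalIdeal A * ofList xs := fun hy' =>
      (length_le_of_isRegular_of_ofList_eq hxs (ofList_eq_of_ofList_cons_eq hspan hy')).not_gt hlen
    obtain ⟨x, rs, hperm, hrs⟩ := exists_perm_cons_ofList_cons_eq hy hy'
    have hyrs : IsRegular A (y :: rs) :=
      isRegular_cons_of_mem_ofList_cons (isRegular_of_perm hxs hperm) (hle hy)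
        (hrs ▸ subset_span (hperm.mem_iff.mpr List.mem_cons_self))
    have hmk_surj := Ideal.Quotient.mk_surjective (I := ofList [y])
    obtain ⟨hyreg, hrsreg⟩ := (isRegular_append_iff_of_surjective hmk_surj mk_ker rs).mp hyrs
    have : Nontrivial (A ⧸ ofList [y]) := hrsreg.nontrivial
    have : IsLocalRing (A ⧸ ofList [y]) :=
      .of_surjective' (Ideal.Quotient.mk _) Ideal.Quotient.mk_surjective
    refine (isRegular_append_iff_of_surjective hmk_surj mk_ker ys).mpr ⟨hyreg, ih hrsreg ?_ ?_ ?_⟩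
    · rw [← map_ofList, ← map_ofList]
      have hmap : map (Ideal.Quotient.mk (ofList [y])) (ofList ([y] ++ ys)) =
          map (Ideal.Quotient.mk (ofList [y])) (ofList ([y] ++ rs)) :=
        congrArg _ (hspan.trans hrs.symm)
      rwa [ofList_append, ofList_append, Ideal.map_sup, Ideal.map_sup, map_quotient_self,
        bot_sup_eq, bot_sup_eq] at hmap
    · simpa [hperm.length_eq] using hlen
    · simpa using hn

theorem ringKrullDim_add_length_eq_of_surjective_of_isRegular {B : Type*} [CommRing B]
    {φ : A →+* B} (hφ : Function.Surjective φ) {xs : List A} (hxs : IsRegular A xs)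
    (hker : RingHom.ker φ = ofList xs) :
    ringKrullDim B + xs.length = ringKrullDim A := by
  rw [← ringKrullDim_add_length_eq_ringKrullDim_of_isRegular xs hxs, ← hker,
    ringKrullDim_eq_of_ringEquiv (RingHom.quotientKerEquivOfSurjective hφ)]

theorem ofList_append_eq_of_sub_mem_sq {B : Type*} [CommRing B] [IsRegularLocalRing B]
    {φ : A →+* B} (hφ : Function.Surjective φ) {p : ℕ} {x y : Fin p → A} {zs : List A}
    (hx : IsRegular A (List.ofFn x)) (hker : RingHom.ker φ = ofList (List.ofFn x))
    (hyz : ofList (List.ofFn y ++ zs) ≤ maximalIdeal A) {M : Matrix (Fin p) (Fin p) A}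
    (hxy : ∀ i, x i - ∑ j, M i j * y j ∈ ofList (List.ofFn y ++ zs) ^ 2) :
    ofList (List.ofFn x ++ zs) = ofList (List.ofFn y ++ zs) := by
  have hxm (i : Fin p) : x i ∈ maximalIdeal A :=
    mem_maximalIdeal_of_isRegular hx (List.mem_ofFn.mpr ⟨i, rfl⟩)
  have hym (i : Fin p) : y i ∈ maximalIdeal A := hyz (subset_span (by simp))
  have hdim := ringKrullDim_add_length_eq_of_surjective_of_isRegular hφ hx hker
  have hind := linearIndependent_toCotangent_of_span_eq_ker hφ
    (x := fun i => ⟨x i, hxm i⟩) (by rw [hker, ofList_ofFn]) (by simpa using hdim.le)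
  have hM : IsUnit M := isUnit_of_sub_mem_sq (y := fun i => ⟨y i, hym i⟩) hind
    fun i => pow_right_mono hyz 2 (hxy i)
  rw [ofList_append, ofList_append, ofList_ofFn, ofList_ofFn]
  refine span_range_sup_eq_of_sub_mem hM fun i => ?_
  rw [← ofList_ofFn, ← ofList_append]
  exact mul_mono_left hyz (sq (ofList (List.ofFn y ++ zs)) ▸ hxy i)

theorem isRegular_map_of_sub_mem_sq {B : Type*} [CommRing B] [IsRegularLocalRing B]
    {φ : A →+* B} (hφ : Function.Surjective φ) {p : ℕ} {x y : Fin p → A} {zs : List A}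
    (hx : IsRegular A (List.ofFn x)) (hker : RingHom.ker φ = ofList (List.ofFn x))
    (hyz : IsRegular A (List.ofFn y ++ zs)) {M : Matrix (Fin p) (Fin p) A}
    (hxy : ∀ i, x i - ∑ j, M i j * y j ∈ ofList (List.ofFn y ++ zs) ^ 2) :
    IsRegular B (zs.map φ) ∧ ofList (zs.map φ) = (ofList (List.ofFn y ++ zs)).map φ := by
  have hle : ofList (List.ofFn y ++ zs) ≤ maximalIdeal A :=
    span_le.mpr fun _ => mem_maximalIdeal_of_isRegular hyz
  have hspan := ofList_append_eq_of_sub_mem_sq hφ hx hker hle hxy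
  have hxz : IsRegular A (List.ofFn x ++ zs) := isRegular_of_ofList_eq hyz hspan (by simp)
  refine ⟨((isRegular_append_iff_of_surjective hφ hker zs).mp hxz).2, ?_⟩
  rw [← hspan, ofList_append, ← hker, Ideal.map_sup, map_ofList,
    (Ideal.map_eq_bot_iff_le_ker φ).mpr le_rfl, bot_sup_eq]

end LocalRing

theorem IsRegularLocal.isRegularLocalRing {R : Type*} [CommRing R] (hR : IsRegularLocal R) :
    IsRegularLocalRing R := by
  obtain ⟨hnoeth, hlocal, s, hmax, hcard⟩ := hR
  refine .of_spanFinrank_maximalIdeal_le R ?_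
  rw [← hcard, ← IsLocalRing.eq_maximalIdeal hmax, ← Set.ncard_coe_finset]
  exact_mod_cast Submodule.spanFinrank_span_le_ncard_of_finite s.finite_toSet

theorem mem_minimalPrimes_of_mem_associatedPrimes_of_isReduced {R : Type*} [CommRing R]
    [IsNoetherianRing R] {I P : Ideal R} [IsReduced (R ⧸ I)]
    (hP : P ∈ associatedPrimes R (R ⧸ I)) : P ∈ I.minimalPrimes := by
  obtain ⟨hprime, a, ha⟩ := Submodule.isAssociatedPrime_iff.mp hP
  obtain ⟨a, rfl⟩ := Ideal.Quotient.mk_surjective a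
  have hmem (x : R) : x ∈ P ↔ x * a ∈ I := by
    rw [ha, Submodule.mem_colon_singleton, Submodule.mem_bot, ← Ideal.Quotient.eq_zero_iff_mem,
      map_mul]
    rfl
  have hIP : I ≤ P := fun x hx => (hmem x).mpr (I.mul_mem_right a hx)
  have haI : a ∉ I := fun h => hprime.ne_top
    ((Ideal.eq_top_iff_one _).mpr ((hmem 1).mpr (by rwa [one_mul])))
  have hrad : I.IsRadical := (Ideal.isRadical_iff_quotient_reduced I).mpr ‹_›
  rw [← hrad.radical, ← Ideal.sInf_minimalPrimes, Ideal.mem_sInf] at haI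
  push Not at haI
  obtain ⟨q, hq, haq⟩ := haI
  have hPq : P ≤ q := fun x hx =>
    (hq.isPrime.mem_or_mem (hq.1.2 ((hmem x).mp hx))).resolve_right haq
  rwa [le_antisymm hPq (hq.2 ⟨hprime, hIP⟩ hPq)]

theorem exists_surjective_localization_quotient {R : Type*} [CommRing R] {I P : Ideal R}
    [P.IsPrime] (hIP : I ≤ P) [(P.map (Ideal.Quotient.mk I)).IsPrime] :
    ∃ φ : Localization.AtPrime P →+* Localization.AtPrime (P.map (Ideal.Quotient.mk I)),
      Function.Surjective φ ∧ RingHom.ker φ = I.map (algebraMap R (Localization.AtPrime P)) ∧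
      φ.comp (algebraMap R _) = (algebraMap (R ⧸ I) _).comp (Ideal.Quotient.mk I) := by
  have hcompl : Algebra.algebraMapSubmonoid (R ⧸ I) P.primeCompl =
      (P.map (Ideal.Quotient.mk I)).primeCompl := by
    ext y
    obtain ⟨y, rfl⟩ := Ideal.Quotient.mk_surjective y
    constructor
    · rintro ⟨x, hx, hxy⟩ hy
      exact hx ((Ideal.mem_quotient_iff_mem hIP).mp (hxy ▸ hy))
    · exact fun hy => ⟨y, fun hyP => hy (Ideal.mem_map_of_mem _ hyP), rfl⟩
  have : IsLocalization (P.map (Ideal.Quotient.mk I)).primeCompl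
      (Localization.AtPrime P ⧸ I.map (algebraMap R (Localization.AtPrime P))) :=
    hcompl ▸ inferInstance
  let e := IsLocalization.algEquiv (P.map (Ideal.Quotient.mk I)).primeCompl
    (Localization.AtPrime P ⧸ I.map (algebraMap R (Localization.AtPrime P)))
    (Localization.AtPrime (P.map (Ideal.Quotient.mk I)))
  refine ⟨e.toRingEquiv.toRingHom.comp (Ideal.Quotient.mk _),
    e.surjective.comp Ideal.Quotient.mk_surjective, ?_,
    RingHom.ext fun x => e.commutes (Ideal.Quotient.mk I x)⟩
  ext x
  simp [RingHom.mem_ker, Ideal.Quotient.eq_zero_iff_mem]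

theorem ofFn_eq_ofFn_castLE_append_ofFn_tailFam {R : Type*} [CommRing R] {p n : ℕ} (hpn : p ≤ n)
    (gs : Fin n → R) :
    List.ofFn gs = List.ofFn (gs ∘ Fin.castLE hpn) ++ List.ofFn (tailFam gs p) := by
  refine List.ext_getElem (by simp [hpn]) fun i hi _ => ?_
  by_cases hip : i < p
  · simp [hip]
  · have hpi : p ≤ i := not_lt.mp hip
    rw [List.getElem_append_right (by simpa using hpi)]
    simp [tailFam, hpi]

theorem statement13_general {R : Type*} [CommRing R] [IsNoetherianRing R] {h g : Ideal R}
    {p n : ℕ} (hpn : p ≤ n) {hs : Fin p → R} {gs : Fin n → R}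
    (hhseq : IsWeaklyRegular R (List.ofFn hs)) (hhgen : h = span (Set.range hs))
    (hgseq : IsWeaklyRegular R (List.ofFn gs)) (hggen : g = span (Set.range gs))
    {P : Ideal R} [P.IsPrime] (hgP : g ≤ P) (hreg : regularAtImage h P) {b : Fin p → Fin p → R}
    (hcong : ∀ i, hs i - ∑ j, b i j * gs (Fin.castLE hpn j) ∈ g ^ 2) :
    generatesAsCI h g gs p P := by
  intro hPmap
  have := (hreg hPmap).isRegularLocalRing
  have hgs (j : Fin n) : gs j ∈ g := hggen ▸ subset_span ⟨j, rfl⟩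
  have hhP : h ≤ P := hhgen ▸ (span_range_le_of_sub_sum_mem (fun j => hgs (Fin.castLE hpn j))
    fun i => pow_le_self two_ne_zero (hcong i)).trans hgP
  obtain ⟨φ, hφ, hker, hφalg⟩ := exists_surjective_localization_quotient hhP
  set loc := algebraMap R (Localization.AtPrime P)
  rw [← ofList_ofFn] at hhgen hggen
  have hlocreg {rs : List R} (hrs : IsWeaklyRegular R rs) (hP : ofList rs ≤ P) :
      IsRegular (Localization.AtPrime P) (rs.map loc) :=
    hrs.isRegular_of_isLocalization_of_mem _ P fun r hr => hP (subset_span hr)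
  have hsplit : (List.ofFn gs).map loc =
      List.ofFn (loc ∘ gs ∘ Fin.castLE hpn) ++ (List.ofFn (tailFam gs p)).map loc := by
    rw [ofFn_eq_ofFn_castLE_append_ofFn_tailFam hpn, List.map_append, List.map_ofFn]
  have hgloc : g.map loc =
      ofList (List.ofFn (loc ∘ gs ∘ Fin.castLE hpn) ++ (List.ofFn (tailFam gs p)).map loc) := by
    rw [hggen, map_ofList, hsplit]
  have hB := isRegular_map_of_sub_mem_sq (x := loc ∘ hs) hφ
    (List.map_ofFn (f := hs) ▸ hlocreg hhseq (hhgen ▸ hhP))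
    (by rw [hker, hhgen, map_ofList, List.map_ofFn])
    (hsplit ▸ hlocreg hgseq (hggen ▸ hgP)) (M := fun i j => loc (b i j)) fun i => by
      rw [← hgloc, ← Ideal.map_pow]
      simpa using mem_map_of_mem loc (hcong i)
  rw [← hgloc, Ideal.map_map, hφalg, ← Ideal.map_map, List.map_map, ← RingHom.coe_comp, hφalg,
    List.map_ofFn, ofList_ofFn] at hB
  exact hB

/-- Proposition `free1`, part 3): for every associated prime `P` of `O/g`, the images of
`g_{p+1}, …, gₙ` in `(O/h)_P̄` form a regular sequence and generate `(g/h)_P̄`. -/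
theorem statement13 {k : Type*} [Field k] [CharZero k] {m : ℕ}
    (h g : Ideal (MvPolynomial (Fin m) k)) (hle : h ≤ g)
    [IsReduced (MvPolynomial (Fin m) k ⧸ g)]
    [ConnectedSpace (PrimeSpectrum (MvPolynomial (Fin m) k ⧸ g))]
    {p n : ℕ} (hpn : p ≤ n)
    (hs : Fin p → MvPolynomial (Fin m) k) (gs : Fin n → MvPolynomial (Fin m) k)
    (hhseq : RingTheory.Sequence.IsRegular (MvPolynomial (Fin m) k) (List.ofFn hs))
    (hhgen : h = Ideal.span (Set.range hs))
    (hgseq : RingTheory.Sequence.IsRegular (MvPolynomial (Fin m) k) (List.ofFn gs))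
    (hggen : g = Ideal.span (Set.range gs))
    (hreg : ∀ q ∈ g.minimalPrimes, regularAtImage h q)
    (b : Fin p → Fin p → MvPolynomial (Fin m) k)
    (hcong : ∀ i : Fin p, hs i - ∑ j, b i j * gs (Fin.castLE hpn j) ∈ g ^ 2) :
    ∀ P ∈ associatedPrimes (MvPolynomial (Fin m) k) (MvPolynomial (Fin m) k ⧸ g),
      generatesAsCI h g gs p P := by
  intro P hP
  have hPmin := mem_minimalPrimes_of_mem_associatedPrimes_of_isReduced hP
  have := hPmin.isPrime
  exact statement13_general hpn hhseq.toIsWeaklyRegular hhgen hgseq.toIsWeaklyRegular hggen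
    hPmin.1.2 (hreg P hPmin) hcong
end

section
/- Let 𝒪 be a polynomial ring over a field k of characteristic zero, 𝔥 ⊆ 𝔤 complete intersection ideals of grades p and n, with 𝒪/𝔤 reduced and Spec(𝒪/𝔤) connected, and the localization of 𝒪/𝔥 at (the image of) every minimal prime of 𝔤 a regular local ring. Suppose 𝔤 is generated by an 𝒪-regular sequence g₁,…,g_n and 𝔥 by h₁,…,h_p with h_i ≡ Σ_{j=1}^p b_{ij} g_j mod 𝔤², and set b = det(b_{ij}). If the 𝒪/𝔤-module T(M) has finite length, then length_{𝒪/𝔤}(T(M)) = length_{𝒪/𝔤}(𝒪/((b) + 𝔤)). -/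
open Ideal

/-- The submodule of relations defining the conormal module `M = g/(g² + h)`. -/
def conormalRel {O : Type*} [CommRing O] (h g : Ideal O) : Submodule O ↥g :=
  Submodule.comap (Submodule.subtype (g : Submodule O O)) (g ^ 2 ⊔ h)

/-- The conormal module `M = g/(g² + h)` (as an `O`-module; it is killed by `g`, so its
`O`-submodule lattice coincides with its `O/g`-submodule lattice). -/
abbrev Conormal {O : Type*} [CommRing O] (h g : Ideal O) :=
  ↥g ⧸ conormalRel h g

/-- The torsion submodule `T(M)` of the conormal module: elements killed by some element
of `O` that is a non-zero-divisor modulo `g`. -/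
def conormalTorsion {O : Type*} [CommRing O] (h g : Ideal O) :
    Submodule O (Conormal h g) where
  carrier := {x | ∃ β : O, Ideal.Quotient.mk g β ∈ nonZeroDivisors (O ⧸ g) ∧ β • x = 0}
  zero_mem' := ⟨1, by simpa using Submonoid.one_mem _, by simp⟩
  add_mem' := fun {x y} hx hy => by
    obtain ⟨α, hα, hax⟩ := hx
    obtain ⟨β, hβ, hby⟩ := hy
    refine ⟨α * β, by rw [_root_.map_mul]; exact mul_mem hα hβ, ?_⟩
    have h1 : (α * β) • x = β • (α • x) := by rw [mul_comm, mul_smul]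
    rw [smul_add, h1, hax, mul_smul, hby, smul_zero, smul_zero, add_zero]
  smul_mem' := fun c x hx => by
    obtain ⟨β, hβ, hbx⟩ := hx
    exact ⟨β, hβ, by rw [smul_comm, hbx, smul_zero]⟩

/-- The length of a module: the Krull dimension of its lattice of submodules. -/
noncomputable def moduleLength (R M : Type*) [CommRing R] [AddCommGroup M]
    [Module R M] : WithBot ℕ∞ :=
  Order.krullDim (Submodule R M)

/-!
Write `A = O/g` and `M = g/(g² + h)`. A regular sequence generating `g` gives a basis of `g/g²`
over `A`, so `M` is the direct sum of a free module and the cokernel of the transpose of `b` modulo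
`g`. For a minimal prime `q` of `g`, regularity of the localization of `O/h` at `q` makes the
generators of `h` linearly independent in the cotangent space of `O_q`; since `b` expresses them
through elements of `q`, its determinant does not lie in `q`. As `A` is reduced, `det b` is a
non-zero-divisor of `A`, and therefore `T(M)` is exactly the cokernel summand.

It remains to see that over a Noetherian ring the cokernel of a square matrix `B` whose determinant
`d` is a non-zero-divisor has the length of `A/(d)`. Every prime containing `d` contains the
annihilator of the cokernel, so if the cokernel has finite length, then so has `A/(d)`. If `A/(d)`
has finite length, localizing at `1 + (d)` changes neither length and puts `d` into the Jacobson
radical, which reduces to dimension at most one. There a row operation makes a diagonal entry of `B`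
a non-zero-divisor, by prime avoidance in a coset of an ideal, and an induction on the size of `B`
applies because lengths are additive on products and finite.
-/

section MatrixCokernel

open scoped nonZeroDivisors

variable {A : Type*} [CommRing A]

theorem length_quotient_range_comp {M : Type*} [AddCommGroup M] [Module A M]
    {f : M →ₗ[A] M} (hf : Function.Injective f) (g : M →ₗ[A] M) :
    Module.length A (M ⧸ LinearMap.range (f ∘ₗ g)) =
      Module.length A (M ⧸ LinearMap.range g) + Module.length A (M ⧸ LinearMap.range f) := by
  have hfg : LinearMap.range g ≤ (LinearMap.range (f ∘ₗ g)).comap f := by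
    rintro _ ⟨x, rfl⟩
    exact ⟨x, rfl⟩
  have hle : LinearMap.range (f ∘ₗ g) ≤ LinearMap.range f := LinearMap.range_comp_le_range g f
  refine Module.length_eq_add_of_exact (Submodule.mapQ _ _ f hfg) (Submodule.factor hle)
    ?_ (Submodule.factor_surjective hle) ?_
  · rw [← LinearMap.ker_eq_bot, eq_bot_iff]
    intro x hx
    obtain ⟨x, rfl⟩ := Submodule.mkQ_surjective _ x
    obtain ⟨y, hy⟩ : f x ∈ LinearMap.range (f ∘ₗ g) := by simpa using hx
    simpa using ⟨y, hf hy⟩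
  · rw [LinearMap.exact_iff, Submodule.factor, Submodule.ker_mapQ, Submodule.range_mapQ]
    rfl

theorem length_quotient_range_conj {M N : Type*} [AddCommGroup M] [Module A M]
    [AddCommGroup N] [Module A N] (e : M ≃ₗ[A] N) {f : M →ₗ[A] M} {g : N →ₗ[A] N}
    (h : ∀ x, e (f x) = g (e x)) :
    Module.length A (M ⧸ LinearMap.range f) = Module.length A (N ⧸ LinearMap.range g) := by
  refine (Submodule.Quotient.equiv _ _ e ?_).length_eq
  rw [← LinearMap.range_comp,
    show e.toLinearMap ∘ₗ f = g ∘ₗ e.toLinearMap from LinearMap.ext h,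
    LinearMap.range_comp_of_range_eq_top _ e.range]

theorem length_quotient_range_prodMap {M N : Type*} [AddCommGroup M] [Module A M]
    [AddCommGroup N] [Module A N] (f : M →ₗ[A] M) (g : N →ₗ[A] N) :
    Module.length A ((M × N) ⧸ LinearMap.range (f.prodMap g)) =
      Module.length A (M ⧸ LinearMap.range f) + Module.length A (N ⧸ LinearMap.range g) := by
  let π := (LinearMap.range f).mkQ.prodMap (LinearMap.range g).mkQ
  have hπ : Function.Surjective π :=
    (Submodule.mkQ_surjective _).prodMap (Submodule.mkQ_surjective _)
  have hker : LinearMap.range (f.prodMap g) = LinearMap.ker π := by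
    rw [LinearMap.range_prodMap, LinearMap.ker_prodMap, Submodule.ker_mkQ, Submodule.ker_mkQ]
  rw [← Module.length_prod, hker, (π.quotKerEquivOfSurjective hπ).length_eq]

/-- The cokernel of a matrix, acting on column vectors. -/
abbrev MatrixCokernel {ι κ : Type*} [Fintype κ] (B : Matrix ι κ A) : Type _ :=
  (ι → A) ⧸ LinearMap.range B.mulVecLin

variable {ι κ : Type*} [Fintype ι] [Fintype κ] [DecidableEq ι] [DecidableEq κ]

/-- The length of the cokernel of `B` is the order of vanishing of `det B`. -/
def HasDetLength (B : Matrix ι ι A) : Prop :=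
  Module.length A (MatrixCokernel B) = Ring.ord A B.det

theorem length_matrixCokernel_mul {B : Matrix ι ι A} (hB : B.det ∈ A⁰) (C : Matrix ι ι A) :
    Module.length A (MatrixCokernel (B * C)) =
      Module.length A (MatrixCokernel B) + Module.length A (MatrixCokernel C) := by
  have h := length_quotient_range_comp (f := B.mulVecLin)
    (Matrix.mulVec_injective_of_det_mem_nonZeroDivisors hB) C.mulVecLin
  rwa [← Matrix.mulVecLin_mul, add_comm] at h

theorem HasDetLength.mul {B C : Matrix ι ι A} (hB : B.det ∈ A⁰) (hBlen : HasDetLength B)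
    (hClen : HasDetLength C) : HasDetLength (B * C) := by
  rw [HasDetLength, length_matrixCokernel_mul hB, hBlen, hClen, Matrix.det_mul,
    Ring.ord_mul' _ hB]

theorem HasDetLength.of_mul {B C : Matrix ι ι A} (hB : B.det ∈ A⁰)
    (hfin : Ring.ord A B.det ≠ ⊤) (hBlen : HasDetLength B) (hBC : HasDetLength (B * C)) :
    HasDetLength C := by
  rw [HasDetLength, length_matrixCokernel_mul hB, hBlen, Matrix.det_mul,
    Ring.ord_mul' _ hB] at hBC
  exact ENat.add_right_injective_of_ne_top hfin hBC

theorem det_smul_mem_range_mulVecLin (B : Matrix ι ι A) (x : ι → A) :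
    B.det • x ∈ LinearMap.range B.mulVecLin :=
  ⟨B.adjugate.mulVec x, by simp [Matrix.mul_adjugate, Matrix.smul_mulVec]⟩

theorem hasDetLength_of_isUnit_det {B : Matrix ι ι A} (hB : IsUnit B.det) :
    HasDetLength B := by
  have hrange : LinearMap.range B.mulVecLin = ⊤ := LinearMap.range_eq_top.2 <|
    Matrix.mulVec_surjective_iff_isUnit.2 ((Matrix.isUnit_iff_isUnit_det B).2 hB)
  have : Subsingleton (MatrixCokernel B) := Submodule.Quotient.subsingleton_iff.2 hrange
  rw [HasDetLength, Module.length_eq_zero, Ring.ord_of_isUnit hB]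

theorem hasDetLength_one : HasDetLength (1 : Matrix ι ι A) :=
  hasDetLength_of_isUnit_det (by simp)

theorem HasDetLength.submatrix_equiv {B : Matrix ι ι A} (e : κ ≃ ι) (hB : HasDetLength B) :
    HasDetLength (B.submatrix e e) := by
  rw [HasDetLength, Matrix.det_submatrix_equiv_self, ← hB]
  refine length_quotient_range_conj (LinearEquiv.funCongrLeft A A e.symm) fun x ↦ ?_
  ext i
  simp [Matrix.submatrix_mulVec_equiv, LinearMap.funLeft, Function.comp_def]

theorem HasDetLength.fromBlocks_diagonal {B : Matrix ι ι A} {C : Matrix κ κ A}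
    (hB : B.det ∈ A⁰) (hBlen : HasDetLength B) (hClen : HasDetLength C) :
    HasDetLength (Matrix.fromBlocks B 0 0 C) := by
  rw [HasDetLength, Matrix.det_fromBlocks_zero₂₁, Ring.ord_mul' _ hB, ← hBlen, ← hClen,
    ← length_quotient_range_prodMap]
  refine length_quotient_range_conj (LinearEquiv.sumArrowLequivProdArrow ι κ A A) fun x ↦ ?_
  ext i <;>
    simp [Matrix.fromBlocks_mulVec, LinearEquiv.sumArrowLequivProdArrow,
      Equiv.sumArrowEquivProdArrow, Function.comp_def]

theorem hasDetLength_of_unique [Unique κ] (C : Matrix κ κ A) : HasDetLength C := by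
  rw [HasDetLength, Matrix.det_unique]
  have hrange : Ideal.span {C default default} =
      LinearMap.range (LinearMap.mulLeft A (C default default)) := by
    ext y
    simp [Ideal.mem_span_singleton', mul_comm]
  rw [Ring.ord, hrange]
  refine length_quotient_range_conj (LinearEquiv.funUnique κ A A) fun x ↦ ?_
  simp [Matrix.mulVec, dotProduct]

end MatrixCokernel

section CosetAvoidance

open scoped nonZeroDivisors

variable {A : Type*} [CommRing A]

theorem exists_mem_forall_add_notMem (s : Finset (Ideal A)) (hs : ∀ P ∈ s, P.IsPrime)
    (I : Ideal A) (w : A) (hI : ∀ P ∈ s, w ∈ P → ¬ I ≤ P) :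
    ∃ y ∈ I, ∀ P ∈ s, w + y ∉ P := by
  induction s using Finset.strongInduction with | H s ih => ?_
  rcases s.eq_empty_or_nonempty with rfl | hne
  · exact ⟨0, I.zero_mem, by simp⟩
  -- Minimality of `P` allows a correction lying in all the other primes but not in `P`.
  obtain ⟨P, hP⟩ := s.exists_minimal hne
  obtain ⟨y, hyI, hy⟩ := ih (s.erase P) (Finset.erase_ssubset hP.prop)
    (fun Q hQ ↦ hs Q (Finset.mem_of_mem_erase hQ)) fun Q hQ ↦ hI Q (Finset.mem_of_mem_erase hQ)
  have hy' : ∀ Q ∈ s, Q ≠ P → w + y ∉ Q := fun Q hQ hne ↦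
    hy Q (Finset.mem_erase.2 ⟨hne, hQ⟩)
  by_cases hyP : w + y ∈ P
  swap
  · refine ⟨y, hyI, fun Q hQ ↦ ?_⟩
    rcases eq_or_ne Q P with rfl | hne
    exacts [hyP, hy' Q hQ hne]
  have := hs P hP.prop
  have hIP : ¬ I ≤ P := fun hle ↦
    hI P hP.prop ((P.add_mem_iff_left (hle hyI)).1 hyP) hle
  have hinfP : ¬ (s.erase P).inf id ≤ P := by
    rw [Ideal.IsPrime.inf_le' this]
    rintro ⟨Q, hQ, hle⟩
    have hQs := Finset.mem_erase.1 hQ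
    exact hQs.1 (le_antisymm hle (hP.le_of_le hQs.2 hle))
  obtain ⟨z, ⟨hzI, hzinf⟩, hzP⟩ := SetLike.not_le_iff_exists.1
    (mt (Ideal.IsPrime.inf_le this).1 (not_or.2 ⟨hIP, hinfP⟩))
  refine ⟨y + z, I.add_mem hyI hzI, fun Q hQ ↦ ?_⟩
  rw [← add_assoc]
  rcases eq_or_ne Q P with rfl | hne
  · rwa [Q.add_mem_iff_right hyP]
  · have hzQ : z ∈ Q := Finset.inf_le (f := id) (Finset.mem_erase.2 ⟨hne, hQ⟩) hzinf
    rw [Q.add_mem_iff_left hzQ]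
    exact hy' Q hQ hne

theorem exists_add_mem_nonZeroDivisors [IsNoetherianRing A] {I : Ideal A} {w x : A}
    (hx : x ∈ A⁰) (hmem : x ∈ Ideal.span {w} ⊔ I) : ∃ y ∈ I, w + y ∈ A⁰ := by
  have hfin := associatedPrimes.finite A A
  have hcompl : ∀ z : A, z ∈ A⁰ ↔ ∀ P ∈ hfin.toFinset, z ∉ P := by
    intro z
    have := Set.ext_iff.1 (biUnion_associatedPrimes_eq_compl_nonZeroDivisors A) z
    simp only [Set.mem_iUnion, SetLike.mem_coe, Set.mem_compl_iff] at this
    rw [← not_iff_not, ← this]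
    simp
  obtain ⟨y, hyI, hy⟩ := exists_mem_forall_add_notMem hfin.toFinset
    (fun P hP ↦ (hfin.mem_toFinset.1 hP).isPrime) I w fun P hP hw hle ↦
      (hcompl x).1 hx P hP (sup_le ((Ideal.span_singleton_le_iff_mem P).2 hw) hle hmem)
  exact ⟨y, hyI, (hcompl _).2 hy⟩

end CosetAvoidance

section DimensionOne

open scoped nonZeroDivisors

variable {A : Type*} [CommRing A] {ι κ : Type*} [Fintype ι] [Fintype κ]
  [DecidableEq ι] [DecidableEq κ]

theorem det_mem_span_range_col (B : Matrix ι ι A) (j : ι) :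
    B.det ∈ Ideal.span (Set.range fun i ↦ B i j) := by
  have hdet : B.det = ∑ i, B.adjugate j i * B i j := by
    rw [← Matrix.mul_apply, Matrix.adjugate_mul, Matrix.smul_apply, Matrix.one_apply_eq,
      smul_eq_mul, mul_one]
  rw [hdet]
  exact Ideal.sum_mem _ fun i _ ↦ Ideal.mul_mem_left _ _ (Ideal.subset_span ⟨i, rfl⟩)

theorem exists_pivot_mem_nonZeroDivisors [IsNoetherianRing A] [Unique κ]
    {B : Matrix (ι ⊕ κ) (ι ⊕ κ) A} (hB : B.det ∈ A⁰) :
    ∃ T : Matrix κ ι A,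
      (Matrix.fromBlocks 1 0 T 1 * B : Matrix (ι ⊕ κ) (ι ⊕ κ) A) (.inr default) (.inr default) ∈
        A⁰ := by
  obtain ⟨y, hy, hpivot⟩ := exists_add_mem_nonZeroDivisors
    (I := Ideal.span (Set.range fun i ↦ B (.inl i) (.inr default)))
    (w := B (.inr default) (.inr default)) hB <| by
      rw [← Ideal.span_union]
      refine Ideal.span_mono ?_ (det_mem_span_range_col B (.inr default))
      rintro _ ⟨i | i, rfl⟩
      · exact .inr ⟨i, rfl⟩
      · exact .inl (by rw [Unique.eq_default i, Set.mem_singleton_iff])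
  obtain ⟨t, rfl⟩ := Ideal.mem_span_range_iff_exists_fun.1 hy
  refine ⟨Matrix.of fun _ i ↦ t i, ?_⟩
  convert hpivot using 1
  simp [Matrix.mul_apply, add_comm]

theorem HasDetLength.fromBlocks_smul_one [IsNoetherianRing A] [Ring.KrullDimLE 1 A] [Unique κ]
    (ih : ∀ V : Matrix ι ι A, V.det ∈ A⁰ → HasDetLength V) {a : A} (ha : a ∈ A⁰)
    {X : Matrix ι ι A} {Y : Matrix ι κ A} {Z : Matrix κ ι A}
    (hE : (Matrix.fromBlocks X Y Z (a • 1)).det ∈ A⁰) :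
    HasDetLength (Matrix.fromBlocks X Y Z (a • 1)) := by
  set E := Matrix.fromBlocks X Y Z (a • 1) with hEdef
  let D : Matrix (ι ⊕ κ) (ι ⊕ κ) A := Matrix.fromBlocks (a • 1) 0 0 1
  let V := a • X - Y * Z
  have hscalar : (a • (1 : Matrix ι ι A)).det ∈ A⁰ := by
    simpa [Matrix.det_smul] using pow_mem ha _
  have hD : D.det ∈ A⁰ := by simpa [D] using hscalar
  have hDlen : HasDetLength D :=
    .fromBlocks_diagonal hscalar (ih _ hscalar) hasDetLength_one
  -- The pivot `a` need not be a unit, so its column is cleared only after multiplying by `D`; the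
  -- cokernel of `D` has finite length in dimension one and is cancelled at the end.
  have hfactor : D * E = Matrix.fromBlocks 1 Y 0 1 *
      (Matrix.fromBlocks V 0 0 1 *
        (Matrix.fromBlocks 1 0 Z 1 * Matrix.fromBlocks 1 0 0 (a • 1))) := by
    simp [D, V, hEdef, Matrix.fromBlocks_multiply]
  have hV : V.det ∈ A⁰ := by
    have hdet : D.det * E.det = V.det * a := by
      simpa [Matrix.det_smul] using congrArg Matrix.det hfactor
    exact (mul_mem_nonZeroDivisors.1 (hdet ▸ mul_mem hD hE)).1
  refine .of_mul hD (Ring.ord_ne_top hD) hDlen ?_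
  rw [hfactor]
  refine .mul (by simp) (hasDetLength_of_isUnit_det (by simp)) ?_
  refine .mul (by simpa using hV) (.fromBlocks_diagonal hV (ih V hV) hasDetLength_one) ?_
  exact .mul (by simp) (hasDetLength_of_isUnit_det (by simp))
    (.fromBlocks_diagonal (by simp) hasDetLength_one (hasDetLength_of_unique _))

theorem hasDetLength_of_krullDimLE_one [IsNoetherianRing A] [Ring.KrullDimLE 1 A]
    {B : Matrix ι ι A} (hB : B.det ∈ A⁰) : HasDetLength B := by
  suffices ∀ (n : ℕ) (C : Matrix (Fin n) (Fin n) A), C.det ∈ A⁰ → HasDetLength C by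
    let e := Fintype.equivFin ι
    have hC := (this _ (B.submatrix e.symm e.symm) (by simpa using hB)).submatrix_equiv e
    simpa using hC
  clear! B
  intro n
  induction n with
  | zero => exact fun C _ ↦ hasDetLength_of_isUnit_det (by simp)
  | succ n ih =>
    intro C hC
    let e : Fin n ⊕ Fin 1 ≃ Fin (n + 1) := finSumFinEquiv
    obtain ⟨T, hT⟩ :=
      exists_pivot_mem_nonZeroDivisors (B := C.submatrix e e) (by simpa using hC)
    let U : Matrix (Fin n ⊕ Fin 1) (Fin n ⊕ Fin 1) A := Matrix.fromBlocks 1 0 T 1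
    obtain ⟨E, hE⟩ : ∃ E, U * C.submatrix e e = E := ⟨_, rfl⟩
    have hU : U.det = 1 := by simp [U]
    have hpivot : E = Matrix.fromBlocks E.toBlocks₁₁ E.toBlocks₁₂ E.toBlocks₂₁
        (E (.inr 0) (.inr 0) • 1) := by
      nth_rw 1 [← E.fromBlocks_toBlocks]
      congr 1
      ext i j
      simp [Subsingleton.elim i 0, Subsingleton.elim j 0, Matrix.toBlocks₂₂]
    have hElen : HasDetLength E := by
      rw [hpivot]
      refine .fromBlocks_smul_one ih (hE ▸ hT) ?_
      rw [← hpivot, ← hE, Matrix.det_mul, hU]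
      simpa using hC
    have hClen : HasDetLength (C.submatrix e e) :=
      .of_mul (by simp [hU]) (by simp [hU])
        (hasDetLength_of_isUnit_det (B := U) (by simp [hU])) (hE ▸ hElen)
    simpa using hClen.submatrix_equiv e.symm

end DimensionOne

section ZariskiLocalization

open scoped nonZeroDivisors

variable {A : Type*} [CommRing A]

/-- The multiplicative set `1 + (d)`. Localizing at it moves `d` into the Jacobson radical without
changing the quotient by `d`. -/
def oneAddMultiples (d : A) : Submonoid A where
  carrier := {x | d ∣ x - 1}
  one_mem' := by simp
  mul_mem' := by
    rintro x y ⟨c, hc⟩ ⟨e, he⟩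
    exact ⟨c * y + e, by linear_combination y * hc + he⟩

theorem length_eq_of_forall_exists_smul_eq {A' M : Type*} [CommRing A'] [Algebra A A']
    [AddCommGroup M] [Module A M] [Module A' M] [IsScalarTower A A' M]
    (h : ∀ a' : A', ∃ a : A, ∀ x : M, a' • x = a • x) :
    Module.length A M = Module.length A' M := by
  have hsurj : Function.Surjective (Submodule.restrictScalarsEmbedding A A' M) := fun N ↦
    ⟨{ N with
        smul_mem' := fun a' x hx ↦ by
          obtain ⟨a, ha⟩ := h a'
          rw [ha]
          exact N.smul_mem a hx }, rfl⟩
  apply WithBot.coe_injective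
  rw [Module.coe_length, Module.coe_length,
    Order.krullDim_eq_of_orderIso (RelIso.ofSurjective _ hsurj)]

section

variable (d : A) (A' : Type*) [CommRing A'] [Algebra A A'] [IsLocalization (oneAddMultiples d) A']

include d

theorem exists_dvd_sub_algebraMap (y : A') :
    ∃ a, algebraMap A A' d ∣ y - algebraMap A A' a := by
  obtain ⟨⟨a, s, c, hc⟩, ha⟩ := IsLocalization.surj (oneAddMultiples d) y
  refine ⟨a, -y * algebraMap A A' c, ?_⟩
  have hc' := congrArg (algebraMap A A') hc
  simp only [map_sub, _root_.map_mul, map_one] at hc'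
  linear_combination -y * hc' + ha

variable {A'}

theorem dvd_of_algebraMap_dvd {a : A} (h : algebraMap A A' d ∣ algebraMap A A' a) : d ∣ a := by
  obtain ⟨y, hy⟩ := h
  obtain ⟨⟨c, s⟩, hc⟩ := IsLocalization.surj (oneAddMultiples d) y
  obtain ⟨u, hu⟩ := (IsLocalization.eq_iff_exists (oneAddMultiples d) A' (x := s * a)
    (y := d * c)).1 (by rw [_root_.map_mul, _root_.map_mul, hy, ← hc]; ring)
  obtain ⟨e, he⟩ := mul_mem u.2 s.2
  exact ⟨u * c - e * a, by linear_combination hu - a * he⟩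

theorem algebraMap_mem_jacobson : algebraMap A A' d ∈ Ring.jacobson A' := by
  rw [← Ideal.jacobson_bot, Ideal.mem_jacobson_bot]
  intro y
  obtain ⟨⟨a, s⟩, ha⟩ := IsLocalization.surj (oneAddMultiples d) y
  obtain ⟨c, hc⟩ := s.2
  have hunit := IsLocalization.map_units A'
    (⟨s + d * a, c + a, by linear_combination hc⟩ : oneAddMultiples d)
  refine isUnit_of_mul_isUnit_left (y := algebraMap A A' s) ?_
  convert hunit using 1
  simp only [map_add, _root_.map_mul, ← ha]
  ring

theorem exists_sub_comp_eq_smul {ι : Type*} (y : ι → A') :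
    ∃ (x : ι → A) (z : ι → A'), y - algebraMap A A' ∘ x = algebraMap A A' d • z := by
  choose x z hz using fun i ↦ exists_dvd_sub_algebraMap d A' (y i)
  exact ⟨x, z, funext hz⟩

variable {ι : Type*} [Fintype ι] [DecidableEq ι] {B : Matrix ι ι A}

theorem comp_mem_range_mulVecLin_map_iff (hB : B.det = d) (x : ι → A) :
    algebraMap A A' ∘ x ∈ LinearMap.range (B.map (algebraMap A A')).mulVecLin ↔
      x ∈ LinearMap.range B.mulVecLin := by
  have hmap (z : ι → A) :
      algebraMap A A' ∘ (B.mulVec z) = (B.map (algebraMap A A')).mulVec (algebraMap A A' ∘ z) :=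
    funext fun i ↦ RingHom.map_mulVec _ B z i
  constructor
  · rintro ⟨y, hy⟩
    obtain ⟨a, z, hz⟩ := exists_sub_comp_eq_smul d y
    have hdvd (i : ι) : d ∣ (x - B.mulVec a) i := by
      refine dvd_of_algebraMap_dvd (A' := A') d ⟨(B.map (algebraMap A A')).mulVec z i, ?_⟩
      have hzB := congrArg (B.map (algebraMap A A')).mulVec hz
      rw [Matrix.mulVec_sub, ← hmap, Matrix.mulVec_smul] at hzB
      rw [Pi.sub_apply, map_sub, ← smul_eq_mul, ← Pi.smul_apply, ← hzB]
      exact sub_left_inj.2 (congrFun hy i).symm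
    choose w hw using hdvd
    have hx : x = B.mulVec a + B.det • w := by
      rw [← sub_eq_iff_eq_add', hB]
      exact funext hw
    rw [hx]
    exact add_mem ⟨a, rfl⟩ (det_smul_mem_range_mulVecLin B w)
  · rintro ⟨z, rfl⟩
    exact ⟨algebraMap A A' ∘ z, (hmap z).symm⟩

theorem length_matrixCokernel_map (hB : B.det = d) :
    Module.length A' (MatrixCokernel (B.map (algebraMap A A'))) =
      Module.length A (MatrixCokernel B) := by
  set B' := B.map (algebraMap A A')
  have hB' (z : ι → A') : algebraMap A A' d • z ∈ LinearMap.range B'.mulVecLin := by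
    rw [← hB, RingHom.map_det]
    exact det_smul_mem_range_mulVecLin B' z
  let φ : (ι → A) →ₗ[A] MatrixCokernel B' :=
    (Submodule.mkQ _).restrictScalars A ∘ₗ (Algebra.linearMap A A').compLeft ι
  have hφ : Function.Surjective φ := by
    intro y
    obtain ⟨y, rfl⟩ := Submodule.mkQ_surjective _ y
    obtain ⟨x, z, hz⟩ := exists_sub_comp_eq_smul d y
    exact ⟨x, ((Submodule.Quotient.eq _).2 (hz ▸ hB' z)).symm⟩
  have hker : LinearMap.range B.mulVecLin = LinearMap.ker φ := by
    ext x
    rw [← comp_mem_range_mulVecLin_map_iff (A' := A') d hB]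
    exact (Submodule.Quotient.mk_eq_zero _).symm
  have hlen : Module.length A (MatrixCokernel B') = Module.length A' (MatrixCokernel B') := by
    refine length_eq_of_forall_exists_smul_eq fun y ↦ ?_
    obtain ⟨a, c, hc⟩ := exists_dvd_sub_algebraMap d A' y
    refine ⟨a, fun x ↦ ?_⟩
    obtain ⟨x, rfl⟩ := Submodule.mkQ_surjective _ x
    rw [← algebraMap_smul A' a, ← sub_eq_zero, ← sub_smul, hc, mul_smul, ← map_smul, ← map_smul,
      Submodule.mkQ_apply, Submodule.Quotient.mk_eq_zero]
    exact hB' _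
  rw [← hlen]
  exact ((Submodule.quotEquivOfEq _ _ hker).trans
    (φ.quotKerEquivOfSurjective hφ)).length_eq.symm

theorem ord_algebraMap : Ring.ord A' (algebraMap A A' d) = Ring.ord A d := by
  let D : Matrix Unit Unit A := Matrix.of fun _ _ ↦ d
  have hD : D.det = d := Matrix.det_unique D
  have h := length_matrixCokernel_map (A' := A') d hD
  rwa [hasDetLength_of_unique, hasDetLength_of_unique, hD, ← RingHom.mapMatrix_apply,
    ← RingHom.map_det, hD] at h

end

theorem krullDimLE_one_of_mem_jacobson [IsNoetherianRing A] {d : A} (hd : d ∈ Ring.jacobson A)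
    (hfin : Ring.ord A d ≠ ⊤) : Ring.KrullDimLE 1 A := by
  have := (isFiniteLength_iff_isNoetherian_isArtinian.1 (Module.length_ne_top_iff.1 hfin)).2
  have hart : IsArtinianRing (A ⧸ Ideal.span {d}) := isArtinian_of_tower A this
  have hquot : ringKrullDim (A ⧸ Ideal.span {d}) ≤ 0 :=
    (Order.krullDimLE_iff _ _).1 (isArtinianRing_iff_krullDimLE_zero.1 hart)
  have hdim := ringKrullDim_le_ringKrullDim_quotient_add_encard {d} (by simpa using hd)
  rw [Set.encard_singleton] at hdim
  exact (Order.krullDimLE_iff _ _).2 (hdim.trans (add_le_add_left hquot 1))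

theorem hasDetLength_of_ord_ne_top [IsNoetherianRing A] {ι : Type*} [Fintype ι] [DecidableEq ι]
    {B : Matrix ι ι A} (hB : B.det ∈ A⁰) (hfin : Ring.ord A B.det ≠ ⊤) : HasDetLength B := by
  let S := oneAddMultiples B.det
  let A' := Localization S
  have : IsNoetherianRing A' := IsLocalization.isNoetherianRing S A' inferInstance
  have hdet : (B.map (algebraMap A A')).det = algebraMap A A' B.det := (RingHom.map_det _ _).symm
  have hord : Ring.ord A' (algebraMap A A' B.det) = Ring.ord A B.det := ord_algebraMap _
  have : Ring.KrullDimLE 1 A' :=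
    krullDimLE_one_of_mem_jacobson (algebraMap_mem_jacobson B.det) (hord ▸ hfin)
  have hB' : (B.map (algebraMap A A')).det ∈ A'⁰ :=
    hdet ▸ IsLocalization.map_nonZeroDivisors_le S A' ⟨_, hB, rfl⟩
  have hlen := hasDetLength_of_krullDimLE_one hB'
  rwa [HasDetLength, hdet, hord, length_matrixCokernel_map B.det rfl] at hlen

end ZariskiLocalization

section FiniteCokernel

variable {A : Type*} [CommRing A] {ι : Type*} [Fintype ι] [DecidableEq ι]

theorem isMaximal_of_det_mem_of_isArtinian {B : Matrix ι ι A} [IsArtinian A (MatrixCokernel B)]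
    {P : Ideal A} [P.IsPrime] (hP : B.det ∈ P) : P.IsMaximal := by
  let π := Ideal.Quotient.mk P
  obtain ⟨v, hv, hvB⟩ : ∃ v ≠ 0, Matrix.vecMul v (B.map π) = 0 :=
    Matrix.exists_vecMul_eq_zero_iff.2 <| by
      rw [← RingHom.mapMatrix_apply, ← RingHom.map_det, Ideal.Quotient.eq_zero_iff_mem.2 hP]
  obtain ⟨i, hi⟩ := Function.ne_iff.1 hv
  let f : (ι → A) →ₗ[A] A ⧸ P :=
    ∑ j, (LinearMap.mulLeft A (v j)) ∘ₗ (Algebra.linearMap A (A ⧸ P)) ∘ₗ LinearMap.proj j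
  have hf (x : ι → A) : f x = v ⬝ᵥ (π ∘ x) := by
    simp [f, dotProduct, π]
  have hker : LinearMap.range B.mulVecLin ≤ LinearMap.ker f := by
    rintro _ ⟨x, rfl⟩
    have hmap : π ∘ (B.mulVec x) = (B.map π).mulVec (π ∘ x) :=
      funext fun j ↦ RingHom.map_mulVec π B x j
    rw [LinearMap.mem_ker, hf, Matrix.mulVecLin_apply, hmap, Matrix.dotProduct_mulVec, hvB,
      zero_dotProduct]
  have hmem (x : A ⧸ P) : LinearMap.mulLeft A (v i) x ∈ LinearMap.range f := by
    obtain ⟨a, rfl⟩ := Ideal.Quotient.mk_surjective x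
    have hsingle : π ∘ Pi.single i a = Pi.single i (π a) :=
      funext fun j ↦ Pi.apply_single (fun _ ↦ π) (fun _ ↦ _root_.map_zero π) i a j
    exact ⟨Pi.single i a, by rw [hf, hsingle, dotProduct_single, LinearMap.mulLeft_apply]⟩
  have hrange : IsArtinian A (LinearMap.range f) := by
    rw [← Submodule.range_liftQ _ f hker]
    infer_instance
  have hdom : IsArtinian A (A ⧸ P) :=
    isArtinian_of_injective ((LinearMap.mulLeft A (v i)).codRestrict _ hmem) <|
      (LinearMap.injective_codRestrict_iff hmem).2 (mul_right_injective₀ hi)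
  have : IsArtinianRing (A ⧸ P) := isArtinian_of_tower A hdom
  exact Ideal.Quotient.maximal_of_isField P (IsArtinianRing.isField_of_isDomain _)

theorem ord_det_ne_top [IsNoetherianRing A] {B : Matrix ι ι A}
    (hB : Module.length A (MatrixCokernel B) ≠ ⊤) : Ring.ord A B.det ≠ ⊤ := by
  have := (isFiniteLength_iff_isNoetherian_isArtinian.1 (Module.length_ne_top_iff.1 hB)).2
  have hmax (Q : Ideal (A ⧸ Ideal.span {B.det})) (hQ : Q.IsPrime) : Q.IsMaximal := by
    have hdet : B.det ∈ Q.comap (Ideal.Quotient.mk _) := by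
      rw [Ideal.mem_comap, Ideal.Quotient.eq_zero_iff_mem.2 (Ideal.mem_span_singleton_self _)]
      exact Q.zero_mem
    have := isMaximal_of_det_mem_of_isArtinian hdet
    rw [← Ideal.map_comap_of_surjective _ Ideal.Quotient.mk_surjective Q] at hQ ⊢
    exact (Ideal.map_eq_top_or_isMaximal_of_surjective _ Ideal.Quotient.mk_surjective
      this).resolve_left hQ.ne_top
  have : IsArtinianRing (A ⧸ Ideal.span {B.det}) :=
    isArtinianRing_iff_krullDimLE_zero.2 (Ring.krullDimLE_zero_iff.2 hmax)
  have := isArtinian_of_surjective_algebraMap (M := A ⧸ Ideal.span {B.det})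
    (Ideal.Quotient.mk_surjective (I := Ideal.span {B.det}))
  exact Module.length_ne_top

open scoped nonZeroDivisors in
theorem hasDetLength [IsNoetherianRing A] {B : Matrix ι ι A} (hB : B.det ∈ A⁰) :
    HasDetLength B := by
  by_cases hfin : Ring.ord A B.det = ⊤
  · rw [HasDetLength, hfin]
    exact not_ne_iff.1 fun hlen ↦ ord_det_ne_top hlen hfin
  · exact hasDetLength_of_ord_ne_top hB hfin

end FiniteCokernel

section IndependentModSq

variable {O : Type*} [CommRing O] {ι κ : Type*} [Fintype ι] [Fintype κ]

/-- The classes of the `x i` in `I/I²` satisfy no nontrivial linear relation over `O/I`. The `x i`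
are not required to lie in `I`. -/
def IndependentModSq (I : Ideal O) (x : ι → O) : Prop :=
  ∀ c : ι → O, ∑ i, c i * x i ∈ I ^ 2 → ∀ i, c i ∈ I

theorem sum_mul_sub_sum_vecMul_mul_mem {I : Ideal O} {b : Matrix ι κ O} {x : ι → O} {y : κ → O}
    (hb : ∀ i, x i - ∑ j, b i j * y j ∈ I) (c : ι → O) :
    ∑ i, c i * x i - ∑ j, Matrix.vecMul c b j * y j ∈ I := by
  have hsum : ∑ i, c i * x i - ∑ j, Matrix.vecMul c b j * y j =
      ∑ i, c i * (x i - ∑ j, b i j * y j) := by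
    change c ⬝ᵥ x - Matrix.vecMul c b ⬝ᵥ y = c ⬝ᵥ (x - b.mulVec y)
    rw [dotProduct_sub, Matrix.dotProduct_mulVec]
  rw [hsum]
  exact sum_mem fun i _ ↦ I.mul_mem_left _ (hb i)

theorem mem_of_sub_sum_mul_mem_sq {I : Ideal O} {b : κ → O} {x : O} {y : κ → O}
    (hy : ∀ j, y j ∈ I) (hb : x - ∑ j, b j * y j ∈ I ^ 2) : x ∈ I := by
  rw [← sub_add_cancel x (∑ j, b j * y j)]
  exact add_mem (Ideal.pow_le_self two_ne_zero hb) (sum_mem fun j _ ↦ I.mul_mem_left _ (hy j))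

theorem IndependentModSq.det_notMem [DecidableEq ι] {I : Ideal O} [I.IsPrime] {b : Matrix ι ι O}
    {x y : ι → O} (hx : IndependentModSq I x) (hy : ∀ j, y j ∈ I)
    (hb : ∀ i, x i - ∑ j, b i j * y j ∈ I ^ 2) : b.det ∉ I := by
  let π := Ideal.Quotient.mk I
  intro hdet
  obtain ⟨v, hv, hvb⟩ : ∃ v ≠ 0, Matrix.vecMul v (b.map π) = 0 :=
    Matrix.exists_vecMul_eq_zero_iff.2 <| by
      rw [← RingHom.mapMatrix_apply, ← RingHom.map_det, Ideal.Quotient.eq_zero_iff_mem.2 hdet]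
  choose c hc using fun i ↦ Ideal.Quotient.mk_surjective (v i)
  obtain rfl : π ∘ c = v := funext hc
  have hcb (j : ι) : Matrix.vecMul c b j ∈ I :=
    Ideal.Quotient.eq_zero_iff_mem.1 ((RingHom.map_vecMul π b c j).trans (congrFun hvb j))
  have hcx : ∑ i, c i * x i ∈ I ^ 2 := by
    rw [← sub_add_cancel (∑ i, c i * x i) (∑ j, Matrix.vecMul c b j * y j)]
    refine add_mem (sum_mul_sub_sum_vecMul_mul_mem hb c) (sum_mem fun j _ ↦ ?_)
    rw [pow_two]
    exact Ideal.mul_mem_mul (hcb j) (hy j)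
  exact hv (funext fun i ↦ Ideal.Quotient.eq_zero_iff_mem.2 (hx c hcx i))

theorem IndependentModSq.sum_mul_mem_sq_iff {I : Ideal O} {x : ι → O} (hx : IndependentModSq I x)
    (hxI : ∀ i, x i ∈ I) {c : ι → O} : ∑ i, c i * x i ∈ I ^ 2 ↔ ∀ i, c i ∈ I := by
  refine ⟨hx c, fun hc ↦ sum_mem fun i _ ↦ ?_⟩
  rw [pow_two]
  exact Ideal.mul_mem_mul (hc i) (hxI i)

end IndependentModSq

section WeaklyRegular

open RingTheory.Sequence

variable {O : Type*} [CommRing O] {n : ℕ}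

theorem ofList_ofFn_s15 (x : Fin n → O) :
    Ideal.ofList (List.ofFn x) = Ideal.span (Set.range x) := by
  simp only [Ideal.ofList, List.mem_ofFn', Set.ofPred_mem_eq]

theorem isWeaklyRegular_ofFn_succ_iff {x : Fin (n + 1) → O} :
    IsWeaklyRegular O (List.ofFn x) ↔ IsWeaklyRegular O (List.ofFn (x ∘ Fin.castSucc)) ∧
      ∀ c, x (Fin.last n) * c ∈ Ideal.span (Set.range (x ∘ Fin.castSucc)) →
        c ∈ Ideal.span (Set.range (x ∘ Fin.castSucc)) := by
  rw [List.ofFn_succ', List.concat_eq_append, isWeaklyRegular_append_iff,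
    isWeaklyRegular_singleton_iff, isSMulRegular_quotient_iff_mem_of_smul_mem, ofList_ofFn_s15,
    smul_eq_mul, Ideal.mul_top]
  rfl

theorem mem_span_range_of_sum_mul_eq_zero {x c : Fin n → O}
    (hx : IsWeaklyRegular O (List.ofFn x)) (hc : ∑ i, c i * x i = 0) (i : Fin n) :
    c i ∈ Ideal.span (Set.range x) := by
  induction n with
  | zero => exact i.elim0
  | succ n ih =>
    obtain ⟨hinit, hlast⟩ := isWeaklyRegular_ofFn_succ_iff.1 hx
    have hle : Ideal.span (Set.range (x ∘ Fin.castSucc)) ≤ Ideal.span (Set.range x) :=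
      Ideal.span_mono (Set.range_comp_subset_range _ _)
    rw [Fin.sum_univ_castSucc] at hc
    have hclast : c (Fin.last n) ∈ Ideal.span (Set.range (x ∘ Fin.castSucc)) := by
      refine hlast _ ?_
      rw [mul_comm, eq_neg_of_add_eq_zero_right hc]
      exact neg_mem (sum_mem fun j _ ↦ Ideal.mul_mem_left _ _ (Ideal.subset_span ⟨j, rfl⟩))
    obtain ⟨d, hd⟩ := Ideal.mem_span_range_iff_exists_fun.1 hclast
    have hrel : ∑ j, (c j.castSucc + d j * x (Fin.last n)) * (x ∘ Fin.castSucc) j = 0 := by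
      rw [← hc, ← hd, Finset.sum_mul, ← Finset.sum_add_distrib]
      refine Finset.sum_congr rfl fun j _ ↦ ?_
      rw [Function.comp_apply]
      ring
    refine Fin.lastCases (hle hclast) (fun j ↦ ?_) i
    rw [← add_sub_cancel_right (c j.castSucc) (d j * x (Fin.last n))]
    exact sub_mem (hle (ih hinit hrel j)) (Ideal.mul_mem_left _ _ (Ideal.subset_span ⟨_, rfl⟩))

theorem independentModSq_span_range {x : Fin n → O} (hx : IsWeaklyRegular O (List.ofFn x)) :
    IndependentModSq (Ideal.span (Set.range x)) x := by
  intro c hc i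
  rw [pow_two, ← smul_eq_mul, Ideal.span, Submodule.mem_ideal_smul_span_iff_exists_sum] at hc
  obtain ⟨a, ha, hsum⟩ := hc
  rw [Finsupp.sum_fintype _ _ fun i ↦ zero_smul O (x i)] at hsum
  have hrel : ∑ i, (c i - a i) * x i = 0 := by
    simp only [sub_mul, Finset.sum_sub_distrib, ← hsum, smul_eq_mul, sub_self]
  rw [← sub_add_cancel (c i) (a i)]
  exact add_mem (mem_span_range_of_sum_mul_eq_zero hx hrel i) (ha i)

end WeaklyRegular

section RegularLocal

open IsLocalRing RingTheory.Sequence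

variable {L S : Type*} [CommRing L] [IsLocalRing L] [CommRing S] {π : L →+* S}

theorem maximalIdeal_eq_span_sup_ker (hπ : Function.Surjective π) {t : Set L}
    (ht : (Ideal.span (π '' t)).IsMaximal) :
    maximalIdeal L = Ideal.span t ⊔ RingHom.ker π := by
  rw [← Ideal.comap_map_of_surjective' _ hπ, Ideal.map_span]
  exact (eq_maximalIdeal (Ideal.comap_isMaximal_of_surjective _ hπ)).symm

theorem maximalIdeal_eq_sup_span_image_compl [IsNoetherianRing L] {ι : Type*} [Fintype ι]
    {K : Ideal L} {x c : ι → L} (hm : maximalIdeal L = K ⊔ Ideal.span (Set.range x))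
    (hcx : ∑ i, c i * x i ∈ maximalIdeal L ^ 2) {i₀ : ι} (hc : c i₀ ∉ maximalIdeal L) :
    maximalIdeal L = K ⊔ Ideal.span (x '' {i₀}ᶜ) := by
  classical
  set J := K ⊔ Ideal.span (x '' {i₀}ᶜ)
  have hxJ (i : ι) (hi : i ≠ i₀) : x i ∈ J :=
    Ideal.mem_sup_right (Ideal.subset_span ⟨i, hi, rfl⟩)
  have hx₀ : x i₀ ∈ J ⊔ maximalIdeal L • maximalIdeal L := by
    rw [← Ideal.unit_mul_mem_iff_mem _ (notMem_maximalIdeal.1 hc),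
      eq_sub_of_add_eq (Finset.add_sum_erase _ (fun i ↦ c i * x i) (Finset.mem_univ i₀)),
      smul_eq_mul, ← pow_two]
    exact sub_mem (Ideal.mem_sup_right hcx) (Ideal.mem_sup_left
      (sum_mem fun i hi ↦ J.mul_mem_left _ (hxJ i (Finset.ne_of_mem_erase hi))))
  refine le_antisymm (Submodule.le_of_le_smul_of_le_jacobson_bot (IsNoetherian.noetherian _)
    (maximalIdeal_le_jacobson _) ?_) ?_
  · rw [hm, sup_le_iff, Ideal.span_le, Set.range_subset_iff, ← hm]
    refine ⟨le_sup_of_le_left le_sup_left, fun i ↦ ?_⟩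
    rcases eq_or_ne i i₀ with rfl | hi
    exacts [hx₀, Ideal.mem_sup_left (hxJ i hi)]
  · rw [hm]
    exact sup_le_sup_left (Ideal.span_mono (Set.image_subset_range _ _)) K

theorem independentModSq_of_isRegularLocal [IsNoetherianRing L] {p : ℕ} {x : Fin p → L}
    (hx : IsRegular L (List.ofFn x)) (hπ : Function.Surjective π)
    (hker : RingHom.ker π = Ideal.span (Set.range x)) (hS : IsRegularLocal S) :
    IndependentModSq (maximalIdeal L) x := by
  intro c hcx i₀
  by_contra hc
  -- A relation with the unit coefficient `c i₀` makes `x i₀` redundant, and then the maximal ideal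
  -- has fewer generators than the dimension of `L`.
  obtain ⟨-, -, s, hs, hcard⟩ := hS
  let t : Set L := Function.surjInv hπ '' s
  have hts : π '' t = s := by simp [t, Set.image_image, Function.surjInv_eq hπ]
  have hm : maximalIdeal L = Ideal.span (t ∪ x '' {i₀}ᶜ) := by
    rw [Ideal.span_union]
    exact maximalIdeal_eq_sup_span_image_compl
      (hker ▸ maximalIdeal_eq_span_sup_ker hπ (hts ▸ hs)) hcx hc
  have hgen : (t ∪ x '' {i₀}ᶜ).ncard ≤ s.card + (p - 1) := by
    refine (Set.ncard_union_le _ _).trans (add_le_add ?_ ?_)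
    · exact (Set.ncard_image_le s.finite_toSet).trans_eq (Set.ncard_coe_finset s)
    · refine (Set.ncard_image_le (Set.toFinite _)).trans_eq ?_
      rw [Set.ncard_compl, Set.ncard_singleton, Nat.card_fin]
  have hdim : ringKrullDim L = s.card + p := by
    have e := (Ideal.quotEquivOfEq ((ofList_ofFn_s15 x).trans hker.symm)).trans
      (RingHom.quotientKerEquivOfSurjective hπ)
    rw [← ringKrullDim_add_length_eq_ringKrullDim_of_isRegular _ hx, List.length_ofFn,
      ringKrullDim_eq_of_ringEquiv e, hcard]
  have hrank : (s.card + p : WithBot ℕ∞) ≤ (s.card + (p - 1) : ℕ) := by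
    rw [← hdim]
    refine (ringKrullDim_le_spanFinrank_maximalIdeal L).trans ?_
    rw [hm]
    exact_mod_cast (Submodule.spanFinrank_span_le_ncard_of_finite (Set.toFinite _)).trans hgen
  have := i₀.pos
  norm_cast at hrank
  omega

theorem ker_localRingHom_quotientMk {O : Type*} [CommRing O] (h q : Ideal O) [q.IsPrime]
    [(q.map (Ideal.Quotient.mk h)).IsPrime]
    (hq : q = (q.map (Ideal.Quotient.mk h)).comap (Ideal.Quotient.mk h)) :
    RingHom.ker (Localization.localRingHom q (q.map (Ideal.Quotient.mk h)) _ hq) =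
      h.map (algebraMap O (Localization.AtPrime q)) := by
  refine le_antisymm (fun z hz ↦ ?_) (Ideal.map_le_iff_le_comap.2 fun x hx ↦ ?_)
  · obtain ⟨x, s, rfl⟩ := IsLocalization.exists_mk'_eq q.primeCompl z
    rw [RingHom.mem_ker, Localization.localRingHom_mk', IsLocalization.mk'_eq_zero_iff] at hz
    obtain ⟨⟨c, hc⟩, hcx⟩ := hz
    obtain ⟨c, rfl⟩ := Ideal.Quotient.mk_surjective c
    rw [← _root_.map_mul, Ideal.Quotient.eq_zero_iff_mem] at hcx
    have hcq : c ∈ q.primeCompl := fun hcq ↦ hc (Ideal.mem_map_of_mem _ hcq)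
    rw [IsLocalization.mem_map_algebraMap_iff q.primeCompl]
    refine ⟨(⟨c * x, hcx⟩, ⟨c, hcq⟩ * s), ?_⟩
    rw [Submonoid.coe_mul, _root_.map_mul, mul_left_comm, IsLocalization.mk'_spec, _root_.map_mul]
  · rw [Ideal.mem_comap, RingHom.mem_ker, Localization.localRingHom_to_map,
      Ideal.Quotient.eq_zero_iff_mem.2 hx, _root_.map_zero]

theorem independentModSq_of_regularAtImage {O : Type*} [CommRing O] [IsNoetherianRing O]
    {q : Ideal O} [q.IsPrime] {p : ℕ} {x : Fin p → O} (hx : IsWeaklyRegular O (List.ofFn x))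
    (hxq : ∀ i, x i ∈ q) (hreg : regularAtImage (Ideal.span (Set.range x)) q) :
    IndependentModSq (maximalIdeal (Localization.AtPrime q))
      (algebraMap O (Localization.AtPrime q) ∘ x) := by
  set h := Ideal.span (Set.range x) with hh
  have hle : RingHom.ker (Ideal.Quotient.mk h) ≤ q := by
    rw [Ideal.mk_ker, hh, Ideal.span_le, Set.range_subset_iff]
    exact hxq
  have hP : (q.map (Ideal.Quotient.mk h)).IsPrime :=
    Ideal.map_isPrime_of_surjective Ideal.Quotient.mk_surjective hle
  have hq : q = (q.map (Ideal.Quotient.mk h)).comap (Ideal.Quotient.mk h) := by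
    rw [Ideal.comap_map_of_surjective' _ Ideal.Quotient.mk_surjective, sup_of_le_left hle]
  have hxL : IsRegular (Localization.AtPrime q)
      (List.ofFn (algebraMap O (Localization.AtPrime q) ∘ x)) := by
    rw [← List.map_ofFn]
    exact hx.isRegular_of_isLocalization_of_mem _ q (by simpa [List.mem_ofFn] using hxq)
  refine independentModSq_of_isRegularLocal hxL
    ((RingHom.surjectiveOnStalks_of_surjective
      Ideal.Quotient.mk_surjective).localRingHom_surjective _ _ hq) ?_ (hreg hP)
  rw [ker_localRingHom_quotientMk, hh, Ideal.map_span, Set.range_comp]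

theorem det_notMem_of_regularAtImage {O : Type*} [CommRing O] [IsNoetherianRing O]
    {q : Ideal O} [q.IsPrime] {p : ℕ} {x y : Fin p → O} (hx : IsWeaklyRegular O (List.ofFn x))
    (hreg : regularAtImage (Ideal.span (Set.range x)) q) (hy : ∀ j, y j ∈ q)
    {b : Matrix (Fin p) (Fin p) O} (hb : ∀ i, x i - ∑ j, b i j * y j ∈ q ^ 2) : b.det ∉ q := by
  let φ := algebraMap O (Localization.AtPrime q)
  have hφ (a : O) : φ a ∈ maximalIdeal (Localization.AtPrime q) ↔ a ∈ q :=
    IsLocalization.AtPrime.to_map_mem_maximal_iff _ q a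
  have hφsq {a : O} (ha : a ∈ q ^ 2) : φ a ∈ maximalIdeal (Localization.AtPrime q) ^ 2 :=
    Ideal.pow_right_mono (Ideal.map_le_iff_le_comap.2 fun a ↦ (hφ a).2) 2
      (Ideal.map_pow φ q 2 ▸ Ideal.mem_map_of_mem φ ha)
  have hind := independentModSq_of_regularAtImage hx (fun i ↦ mem_of_sub_sum_mul_mem_sq hy (hb i))
    hreg
  have hdet := hind.det_notMem (b := b.map φ) (y := φ ∘ y) (fun j ↦ (hφ _).2 (hy j))
    fun i ↦ by simpa using hφsq (hb i)
  rwa [← RingHom.mapMatrix_apply, ← RingHom.map_det, hφ] at hdet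

end RegularLocal

section Conormal

variable {O : Type*} [CommRing O] {ι κ : Type*} {h g : Ideal O} {gs : κ → O} {hs : ι → O}
  {b : Matrix ι ι O}

theorem sum_extend_mul [Fintype ι] [Fintype κ] (σ : ι ↪ κ) (c : ι → O) (gs : κ → O) :
    ∑ k, Function.extend σ c 0 k * gs k = ∑ i, c i * gs (σ i) := by
  refine (Fintype.sum_of_injective σ σ.injective _ _ (fun k hk ↦ ?_) fun i ↦ ?_).symm
  · rw [Function.extend_apply' _ _ _ hk, Pi.zero_apply, zero_mul]
  · rw [σ.injective.extend_apply]

theorem forall_sub_extend_mem_iff (σ : ι ↪ κ) (a : ι → O) (c : κ → O) :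
    (∀ k, c k - Function.extend σ a 0 k ∈ g) ↔
      (∀ i, c (σ i) - a i ∈ g) ∧ ∀ k ∉ Set.range σ, c k ∈ g := by
  refine ⟨fun H ↦ ⟨fun i ↦ ?_, fun k hk ↦ ?_⟩, fun ⟨H, H'⟩ k ↦ ?_⟩
  · simpa only [σ.injective.extend_apply] using H (σ i)
  · simpa only [Function.extend_apply' _ _ _ hk, Pi.zero_apply, sub_zero] using H k
  · by_cases hk : k ∈ Set.range σ
    · obtain ⟨i, rfl⟩ := hk
      simpa only [σ.injective.extend_apply] using H i
    · simpa only [Function.extend_apply' _ _ _ hk, Pi.zero_apply, sub_zero] using H' k hk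

variable [Fintype ι] [Fintype κ]

/-- The linear map `c ↦ ∑ k, c k * gs k` from `O^κ` to the conormal module `g/(g² + h)`. -/
def conormalCombination (h : Ideal O) (hgs : ∀ k, gs k ∈ g) : (κ → O) →ₗ[O] Conormal h g :=
  (conormalRel h g).mkQ ∘ₗ Fintype.linearCombination O fun k ↦ (⟨gs k, hgs k⟩ : g)

theorem conormalCombination_eq_zero_iff_sum_mem (hgs : ∀ k, gs k ∈ g) (c : κ → O) :
    conormalCombination h hgs c = 0 ↔ ∑ k, c k * gs k ∈ g ^ 2 ⊔ h := by
  rw [conormalCombination, LinearMap.comp_apply, Submodule.mkQ_apply,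
    Submodule.Quotient.mk_eq_zero, conormalRel, Submodule.mem_comap]
  simp [Fintype.linearCombination_apply]

theorem conormalCombination_surjective (hgs : ∀ k, gs k ∈ g) (hg : g ≤ Ideal.span (Set.range gs)) :
    Function.Surjective (conormalCombination h hgs) := by
  refine (Submodule.mkQ_surjective _).comp fun ⟨f, hf⟩ ↦ ?_
  obtain ⟨c, hc⟩ := Ideal.mem_span_range_iff_exists_fun.1 (hg hf)
  exact ⟨c, Subtype.ext (by simpa [Fintype.linearCombination_apply] using hc)⟩

section

variable (hgs : ∀ k, gs k ∈ g) (hind : IndependentModSq g gs) (σ : ι ↪ κ)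
  (hh : h = Ideal.span (Set.range hs)) (hcong : ∀ i, hs i - ∑ j, b i j * gs (σ j) ∈ g ^ 2)

include hind hh hcong

theorem conormalCombination_eq_zero_iff (c : κ → O) :
    conormalCombination h hgs c = 0 ↔
      (∃ a, ∀ i, c (σ i) - Matrix.vecMul a b i ∈ g) ∧ ∀ k ∉ Set.range σ, c k ∈ g := by
  have hsup : ∑ k, c k * gs k ∈ g ^ 2 ⊔ h ↔
      ∃ a : ι → O, ∑ k, c k * gs k - ∑ i, a i * hs i ∈ g ^ 2 := by
    rw [hh, Submodule.mem_sup]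
    refine ⟨fun ⟨f, hf, f', hf', hff'⟩ ↦ ?_, fun ⟨a, ha⟩ ↦ ⟨_, ha, _, ?_, sub_add_cancel _ _⟩⟩
    · obtain ⟨a, rfl⟩ := Ideal.mem_span_range_iff_exists_fun.1 hf'
      exact ⟨a, by rwa [← hff', add_sub_cancel_right]⟩
    · exact Ideal.mem_span_range_iff_exists_fun.2 ⟨a, rfl⟩
  have hsub (a : ι → O) : ∑ k, c k * gs k - ∑ i, a i * hs i ∈ g ^ 2 ↔
      ∀ k, c k - Function.extend σ (Matrix.vecMul a b) 0 k ∈ g := by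
    rw [← hind.sum_mul_mem_sq_iff hgs,
      ← add_mem_cancel_right (sum_mul_sub_sum_vecMul_mul_mem hcong a), sub_add_sub_cancel,
      ← sum_extend_mul σ, ← Finset.sum_sub_distrib]
    simp only [sub_mul]
  rw [conormalCombination_eq_zero_iff_sum_mem, hsup]
  simp only [hsub, forall_sub_extend_mem_iff, exists_and_right]

theorem conormalCombination_mem_conormalTorsion_iff [DecidableEq ι]
    (hdet : Ideal.Quotient.mk g b.det ∈ nonZeroDivisors (O ⧸ g)) (c : κ → O) :
    conormalCombination h hgs c ∈ conormalTorsion h g ↔ ∀ k ∉ Set.range σ, c k ∈ g := by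
  refine ⟨fun ⟨β, hβ, hβc⟩ k hk ↦ ?_, fun hc ↦ ⟨b.det, hdet, ?_⟩⟩
  · rw [← map_smul, conormalCombination_eq_zero_iff hgs hind σ hh hcong] at hβc
    have hβk := Ideal.Quotient.eq_zero_iff_mem.2 (hβc.2 k hk)
    rw [Pi.smul_apply, smul_eq_mul, _root_.map_mul] at hβk
    exact Ideal.Quotient.eq_zero_iff_mem.1 ((mem_nonZeroDivisors_iff.1 hβ).1 _ hβk)
  · rw [← map_smul, conormalCombination_eq_zero_iff hgs hind σ hh hcong]
    refine ⟨⟨Matrix.vecMul (c ∘ σ) b.adjugate, fun i ↦ ?_⟩, fun k hk ↦ g.mul_mem_left _ (hc k hk)⟩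
    rw [Matrix.vecMul_vecMul, Matrix.adjugate_mul, Matrix.vecMul_smul, Matrix.vecMul_one]
    simp

theorem range_conormalCombination_comp_extendByZero [DecidableEq ι]
    (hg : g ≤ Ideal.span (Set.range gs))
    (hdet : Ideal.Quotient.mk g b.det ∈ nonZeroDivisors (O ⧸ g)) :
    LinearMap.range (conormalCombination h hgs ∘ₗ Function.ExtendByZero.linearMap O σ) =
      conormalTorsion h g := by
  have htors := conormalCombination_mem_conormalTorsion_iff hgs hind σ hh hcong hdet
  refine le_antisymm ?_ fun x hx ↦ ?_
  · rintro _ ⟨c, rfl⟩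
    refine (htors _).2 fun k hk ↦ ?_
    rw [Function.ExtendByZero.linearMap_apply, Function.extend_apply' _ _ _ hk]
    exact g.zero_mem
  · obtain ⟨c, rfl⟩ := conormalCombination_surjective (h := h) hgs hg x
    refine ⟨c ∘ σ, sub_eq_zero.1 ?_⟩
    rw [LinearMap.comp_apply, ← map_sub, conormalCombination_eq_zero_iff hgs hind σ hh hcong]
    refine ⟨⟨0, fun i ↦ ?_⟩, fun k hk ↦ ?_⟩
    · simp [Function.ExtendByZero.linearMap_apply, σ.injective.extend_apply]
    · rw [Pi.sub_apply, Function.ExtendByZero.linearMap_apply, Function.extend_apply' _ _ _ hk,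
        Pi.zero_apply, zero_sub, neg_mem_iff]
      exact (htors c).1 hx k hk

end

/-- Reduction modulo `g` followed by the projection onto the cokernel of the transpose of `b`
modulo `g`. -/
def toCokernelTransposeMod (g : Ideal O) (b : Matrix ι ι O) :
    (ι → O) →ₗ[O] MatrixCokernel (b.map (Ideal.Quotient.mk g)).transpose :=
  (Submodule.mkQ _).restrictScalars O ∘ₗ (Submodule.mkQ g).compLeft ι

theorem toCokernelTransposeMod_surjective (g : Ideal O) (b : Matrix ι ι O) :
    Function.Surjective (toCokernelTransposeMod g b) :=
  (Submodule.mkQ_surjective _).comp (Submodule.mkQ_surjective g).comp_left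

theorem toCokernelTransposeMod_eq_zero_iff (c : ι → O) :
    toCokernelTransposeMod g b c = 0 ↔ ∃ a, ∀ i, c i - Matrix.vecMul a b i ∈ g := by
  let π := Ideal.Quotient.mk g
  have hzero : toCokernelTransposeMod g b c = 0 ↔ ∃ v, Matrix.vecMul v (b.map π) = π ∘ c := by
    simp only [← Matrix.mulVec_transpose]
    exact Submodule.Quotient.mk_eq_zero _
  have hmap (a : ι → O) : Matrix.vecMul (π ∘ a) (b.map π) = π ∘ Matrix.vecMul a b :=
    (funext fun i ↦ RingHom.map_vecMul π b a i).symm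
  rw [hzero, (Ideal.Quotient.mk_surjective.comp_left (α := ι)).exists]
  refine exists_congr fun a ↦ ?_
  rw [hmap, eq_comm, funext_iff]
  exact forall_congr' fun i ↦ Ideal.Quotient.eq

theorem length_conormalTorsion_eq_length_matrixCokernel [DecidableEq ι]
    (hind : IndependentModSq g gs) (σ : ι ↪ κ)
    (hh : h = Ideal.span (Set.range hs)) (hg : g = Ideal.span (Set.range gs))
    (hcong : ∀ i, hs i - ∑ j, b i j * gs (σ j) ∈ g ^ 2)
    (hdet : Ideal.Quotient.mk g b.det ∈ nonZeroDivisors (O ⧸ g)) :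
    Module.length O (conormalTorsion h g) =
      Module.length O (MatrixCokernel (b.map (Ideal.Quotient.mk g)).transpose) := by
  have hgs (k : κ) : gs k ∈ g := hg ▸ Ideal.subset_span ⟨k, rfl⟩
  let φ := conormalCombination h hgs ∘ₗ Function.ExtendByZero.linearMap O σ
  let ψ := toCokernelTransposeMod g b
  have hker : LinearMap.ker φ = LinearMap.ker ψ := by
    ext c
    rw [LinearMap.mem_ker, LinearMap.mem_ker, LinearMap.comp_apply,
      conormalCombination_eq_zero_iff hgs hind σ hh hcong, toCokernelTransposeMod_eq_zero_iff]
    simp only [Function.ExtendByZero.linearMap_apply, σ.injective.extend_apply]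
    refine and_iff_left fun k hk ↦ ?_
    rw [Function.extend_apply' _ _ _ hk]
    exact g.zero_mem
  rw [← range_conormalCombination_comp_extendByZero hgs hind σ hh hcong hg.le hdet]
  exact (φ.quotKerEquivRange.symm.trans ((Submodule.quotEquivOfEq _ _ hker).trans
    (ψ.quotKerEquivOfSurjective (toCokernelTransposeMod_surjective g b)))).length_eq

end Conormal

section TorsionNumber

theorem mem_nonZeroDivisors_of_forall_notMem_minimalPrimes {A : Type*} [CommRing A] [IsReduced A]
    {a : A} (ha : ∀ q ∈ minimalPrimes A, a ∉ q) : a ∈ nonZeroDivisors A := by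
  refine mem_nonZeroDivisors_iff_right.2 fun x hx ↦ ?_
  have hnil : x ∈ nilradical A := by
    rw [nilradical, ← Ideal.sInf_minimalPrimes, Ideal.mem_sInf]
    intro q hq
    exact (hq.1.1.mem_or_mem (hx ▸ q.zero_mem : x * a ∈ q)).resolve_right (ha q hq)
  rwa [nilradical_eq_zero] at hnil

theorem length_quotient_span_mk {O : Type*} [CommRing O] (g : Ideal O) (x : O) :
    Module.length O ((O ⧸ g) ⧸ Ideal.span {Ideal.Quotient.mk g x}) =
      Module.length O (O ⧸ (Ideal.span {x} ⊔ g)) := by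
  rw [sup_comm, ← (DoubleQuot.quotQuotEquivQuotSupₐ O g (Ideal.span {x})).toLinearEquiv.length_eq,
    Ideal.map_span, Set.image_singleton]
  rfl

variable {O : Type*} [CommRing O] [IsNoetherianRing O] {h g : Ideal O} [IsReduced (O ⧸ g)]
  {p n : ℕ} {hs : Fin p → O} {gs : Fin n → O} {b : Matrix (Fin p) (Fin p) O}

theorem mk_det_mem_nonZeroDivisors (σ : Fin p → Fin n)
    (hhseq : RingTheory.Sequence.IsWeaklyRegular O (List.ofFn hs))
    (hhgen : h = Ideal.span (Set.range hs)) (hgs : ∀ k, gs k ∈ g)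
    (hreg : ∀ q ∈ g.minimalPrimes, regularAtImage h q)
    (hcong : ∀ i, hs i - ∑ j, b i j * gs (σ j) ∈ g ^ 2) :
    Ideal.Quotient.mk g b.det ∈ nonZeroDivisors (O ⧸ g) := by
  refine mem_nonZeroDivisors_of_forall_notMem_minimalPrimes fun Q hQ ↦ ?_
  have hq : Q.comap (Ideal.Quotient.mk g) ∈ g.minimalPrimes :=
    Ideal.minimalPrimes_eq_comap (I := g) ▸ ⟨Q, hQ, rfl⟩
  have := hq.1.1
  exact det_notMem_of_regularAtImage hhseq (hhgen ▸ hreg _ hq) (fun j ↦ hq.1.2 (hgs (σ j)))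
    fun i ↦ Ideal.pow_right_mono hq.1.2 2 (hcong i)

theorem statement15_general (σ : Fin p ↪ Fin n)
    (hhseq : RingTheory.Sequence.IsWeaklyRegular O (List.ofFn hs))
    (hhgen : h = Ideal.span (Set.range hs))
    (hgseq : RingTheory.Sequence.IsWeaklyRegular O (List.ofFn gs))
    (hggen : g = Ideal.span (Set.range gs))
    (hreg : ∀ q ∈ g.minimalPrimes, regularAtImage h q)
    (hcong : ∀ i, hs i - ∑ j, b i j * gs (σ j) ∈ g ^ 2) :
    moduleLength O ↥(conormalTorsion h g) = moduleLength O (O ⧸ (Ideal.span {b.det} ⊔ g)) := by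
  have hgs (k : Fin n) : gs k ∈ g := hggen ▸ Ideal.subset_span ⟨k, rfl⟩
  let B := (b.map (Ideal.Quotient.mk g)).transpose
  have hB : B.det = Ideal.Quotient.mk g b.det := by
    rw [Matrix.det_transpose, RingHom.map_det, RingHom.mapMatrix_apply]
  have hdet := mk_det_mem_nonZeroDivisors σ hhseq hhgen hgs hreg hcong
  have hmk : Function.Surjective (algebraMap O (O ⧸ g)) := Ideal.Quotient.mk_surjective
  suffices hlength : Module.length O (conormalTorsion h g) =
      Module.length O (O ⧸ (Ideal.span {b.det} ⊔ g)) by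
    rw [moduleLength, moduleLength, ← Module.coe_length, ← Module.coe_length, hlength]
  calc Module.length O (conormalTorsion h g)
    _ = Module.length O (MatrixCokernel B) :=
      length_conormalTorsion_eq_length_matrixCokernel
        (hggen ▸ independentModSq_span_range hgseq) σ hhgen hggen hcong hdet
    _ = Module.length (O ⧸ g) (MatrixCokernel B) := Module.length_eq_of_surjective hmk
    _ = Ring.ord (O ⧸ g) B.det := hasDetLength (hB ▸ hdet)
    _ = Module.length O ((O ⧸ g) ⧸ Ideal.span {Ideal.Quotient.mk g b.det}) := by
      rw [hB, Ring.ord, Module.length_eq_of_surjective hmk]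
    _ = Module.length O (O ⧸ (Ideal.span {b.det} ⊔ g)) := length_quotient_span_mk g b.det

end TorsionNumber

/-- Proposition `free1`, part 5), the length formula: if `T(M)` has finite length then
`length(T(M)) = length(O/((b) + g))` (lengths over `O/g`, equivalently over `O` since both
modules are killed by `g`). -/
theorem statement15 {k : Type*} [Field k] [CharZero k] {m : ℕ}
    (h g : Ideal (MvPolynomial (Fin m) k)) (hle : h ≤ g)
    [IsReduced (MvPolynomial (Fin m) k ⧸ g)]
    [ConnectedSpace (PrimeSpectrum (MvPolynomial (Fin m) k ⧸ g))]
    {p n : ℕ} (hpn : p ≤ n)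
    (hs : Fin p → MvPolynomial (Fin m) k) (gs : Fin n → MvPolynomial (Fin m) k)
    (hhseq : RingTheory.Sequence.IsRegular (MvPolynomial (Fin m) k) (List.ofFn hs))
    (hhgen : h = Ideal.span (Set.range hs))
    (hgseq : RingTheory.Sequence.IsRegular (MvPolynomial (Fin m) k) (List.ofFn gs))
    (hggen : g = Ideal.span (Set.range gs))
    (hreg : ∀ q ∈ g.minimalPrimes, regularAtImage h q)
    (b : Fin p → Fin p → MvPolynomial (Fin m) k)
    (hcong : ∀ i : Fin p, hs i - ∑ j, b i j * gs (Fin.castLE hpn j) ∈ g ^ 2)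
    (hfin : IsFiniteLength (MvPolynomial (Fin m) k) ↥(conormalTorsion h g)) :
    moduleLength (MvPolynomial (Fin m) k) ↥(conormalTorsion h g) =
      moduleLength (MvPolynomial (Fin m) k)
        (MvPolynomial (Fin m) k ⧸ (Ideal.span {Matrix.det (Matrix.of b)} ⊔ g)) := by
  exact statement15_general (Fin.castLEEmb hpn) hhseq.toIsWeaklyRegular hhgen
    hgseq.toIsWeaklyRegular hggen hreg (b := Matrix.of b) hcong
end

section
/- Let 𝒪 = ℂ[x, y₁,…,y_n] and let 𝔤 = (y₁,…,y_n) define the line Σ (the x-axis) in ℂ^{n+1}. Let 𝔥 ⊆ 𝔤 be a complete intersection ideal of grade p whose zero set X = V(𝔥) has an isolated singularity at the origin, i.e. the localization of 𝒪/𝔥 at every prime containing 𝔥 other than (x, y₁,…,y_n) is a regular local ring, and (𝒪/𝔥) localized at (x,y₁,…,y_n) is not regular or p < n+1. Then there exists an 𝒪-regular sequence y′₁,…,y′_n generating 𝔤 such that: the images of y′₁,…,y′_p in the conormal module M = 𝔤/(𝔤²+𝔥) generate its torsion T(M); the images of y′_{p+1},…,y′_n generate N = M/T(M), which is free of rank n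 − p over 𝒪/𝔤; and ∫_𝔥 𝔤 = (y′₁,…,y′_p) + (y′_{p+1},…,y′_n)². -/
open Ideal

/-!
Identify `O ⧸ g` with the principal ideal domain `K[x]`. The module `g / g²` is free of rank `n`
over it, and `T(M)` is the saturation of the span of the classes of the generators `hᵢ` modulo
that span. Regularity of `X` at the generic point of `Σ` makes these classes linearly
independent, so Smith normal form gives a basis of `g / g²` whose first `p` members span the
saturation. A basis lifts to a regular sequence generating `g`, because an invertible matrix over
`K[x]` defines an automorphism of `O` that acts linearly on the `yⱼ`.

Every derivation preserving `h` maps the preimage of `T(M)` into `g`, as `O ⧸ g` is a domain.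
Conversely, the lifts to `O` of the coordinate functionals of the basis, corrected by Cramer's rule
so that they kill all `hᵢ`, detect the coordinates outside the saturation up to the nonzero factor
`det (Dₗ hᵢ)`; hence `∫_h g` is exactly that preimage.
-/

namespace RelativeConormal

section Saturation

variable {R M ι κ : Type*} [CommRing R] [AddCommGroup M] [Module R M]

/-- The saturation of a submodule `N` of `M`: the preimage in `M` of the torsion submodule of
`M ⧸ N`. -/
def saturation (N : Submodule R M) : Submodule R M :=
  (Submodule.torsion R (M ⧸ N)).comap N.mkQ

lemma mem_saturation_iff {N : Submodule R M} {v : M} :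
    v ∈ saturation N ↔ ∃ a ∈ nonZeroDivisors R, a • v ∈ N := by
  simp only [saturation, Submodule.mem_comap, Submodule.mem_torsion_iff, Subtype.exists,
    Submonoid.mk_smul, Submodule.mkQ_apply, ← Submodule.Quotient.mk_smul,
    Submodule.Quotient.mk_eq_zero, exists_prop]

lemma le_saturation (N : Submodule R M) : N ≤ saturation N := fun v hv =>
  mem_saturation_iff.mpr ⟨1, one_mem _, by simpa⟩

lemma mem_span_range_comp_iff_repr_eq_zero (b : Module.Basis κ R M) (e : ι → κ) {v : M} :
    v ∈ Submodule.span R (Set.range (b ∘ e)) ↔ ∀ k ∉ Set.range e, b.repr v k = 0 := by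
  rw [Set.range_comp, b.mem_span_image, Finsupp.support_subset_iff]

lemma saturation_span_range_smul [IsDomain R] (b : Module.Basis κ R M) (e : ι → κ)
    {a : ι → R} (ha : ∀ i, a i ≠ 0) :
    saturation (Submodule.span R (Set.range fun i => a i • b (e i))) =
      Submodule.span R (Set.range (b ∘ e)) := by
  have hle : Submodule.span R (Set.range fun i => a i • b (e i)) ≤
      Submodule.span R (Set.range (b ∘ e)) := by
    rw [Submodule.span_le]
    rintro _ ⟨i, rfl⟩
    exact Submodule.smul_mem _ _ (Submodule.subset_span ⟨i, rfl⟩)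
  apply le_antisymm
  · intro v hv
    obtain ⟨c, hc, hcv⟩ := mem_saturation_iff.mp hv
    rw [mem_span_range_comp_iff_repr_eq_zero]
    intro k hk
    have := (mem_span_range_comp_iff_repr_eq_zero b e).mp (hle hcv) k hk
    rw [map_smul, Finsupp.smul_apply, smul_eq_mul] at this
    exact (mul_eq_zero.mp this).resolve_left (nonZeroDivisors.ne_zero hc)
  · rw [Submodule.span_le]
    rintro _ ⟨i, rfl⟩
    exact mem_saturation_iff.mpr
      ⟨a i, mem_nonZeroDivisors_of_ne_zero (ha i), Submodule.subset_span ⟨i, rfl⟩⟩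

lemma exists_basis_saturation_eq [IsDomain R] [IsPrincipalIdealRing R] {n p : ℕ} (hpn : p ≤ n)
    (b₀ : Module.Basis (Fin n) R M) {w : Fin p → M} (hw : LinearIndependent R w) :
    ∃ b : Module.Basis (Fin n) R M, saturation (Submodule.span R (Set.range w)) =
      Submodule.span R (Set.range (b ∘ Fin.castLE hpn)) := by
  obtain ⟨p', n', hle, b, bN, a, hsnf⟩ := Submodule.exists_smith_normal_form_of_le b₀
    (Submodule.span R (Set.range w)) ⊤ le_top
  obtain rfl : p' = p := by
    simpa [Module.finrank_eq_card_basis bN] using finrank_span_eq_card hw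
  obtain rfl : n' = n := by
    simpa [finrank_top, Module.finrank_eq_card_basis b₀] using
      (Module.finrank_eq_card_basis b).symm
  have ha : ∀ i, a i ≠ 0 := fun i hi =>
    bN.ne_zero i (Subtype.ext (by simp [hsnf, hi]))
  have hspan : Submodule.span R (Set.range w) =
      Submodule.span R
        (Set.range fun i => a i • (b.map Submodule.topEquiv) (Fin.castLE hpn i)) := by
    have := congrArg (Submodule.map (Submodule.subtype _)) bN.span_eq
    rw [Submodule.map_span, Submodule.map_subtype_top, ← Set.range_comp] at this
    rw [← this]
    congr 2
    ext1 i
    simp [hsnf]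
  exact ⟨b.map Submodule.topEquiv, hspan ▸ saturation_span_range_smul _ _ ha⟩

lemma linearIndependent_of_saturation_eq_top [IsDomain R] [Fintype ι] {v : ι → M}
    (hv : saturation (Submodule.span R (Set.range v)) = ⊤)
    (hcard : Fintype.card ι ≤ Module.finrank R M) : LinearIndependent R v := by
  have htorsion : Module.rank R (M ⧸ Submodule.span R (Set.range v)) = 0 := by
    rw [Module.rank_eq_zero_iff_isTorsion]
    intro x
    obtain ⟨x, rfl⟩ := Submodule.mkQ_surjective _ x
    have : x ∈ saturation (Submodule.span R (Set.range v)) := hv ▸ Submodule.mem_top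
    exact (Submodule.mem_torsion_iff _).mp this
  have hrank := Submodule.rank_quotient_add_rank (Submodule.span R (Set.range v))
  rw [htorsion, zero_add] at hrank
  rwa [linearIndependent_iff_card_le_finrank_span, Set.finrank, Module.finrank, hrank]

lemma det_repr_ne_zero [IsDomain R] [Fintype ι] [DecidableEq ι] (b : Module.Basis κ R M)
    {e : ι → κ} {w : ι → M} (hw : LinearIndependent R w)
    (hspan : ∀ i, w i ∈ Submodule.span R (Set.range (b ∘ e))) :
    (Matrix.of fun i l => b.repr (w i) (e l)).det ≠ 0 := by
  intro hdet
  obtain ⟨c, hc, hc0⟩ := Matrix.exists_vecMul_eq_zero_iff.mpr hdet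
  refine hc (funext (Fintype.linearIndependent_iff.mp hw c (b.ext_elem fun k => ?_)))
  by_cases hk : k ∈ Set.range e
  · obtain ⟨l, rfl⟩ := hk
    simpa [Matrix.vecMul, dotProduct] using congrFun hc0 l
  · have h0 i := (mem_span_range_comp_iff_repr_eq_zero b e).mp (hspan i) k hk
    simp [h0]

end Saturation

section ConormalModule

variable {O ι : Type*} [CommRing O] {g : Ideal O}

/-- The `O ⧸ g`-submodule of `g / g²` generated by the classes of a family of elements of `g`. -/
def cotangentSpan (w : ι → g) : Submodule (O ⧸ g) g.Cotangent :=
  Submodule.span (O ⧸ g) (Set.range fun i => g.toCotangent (w i))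

lemma cotangentSpan_restrictScalars (w : ι → g) :
    (cotangentSpan w).restrictScalars O =
      (Submodule.span O (Set.range w)).map g.toCotangent := by
  rw [cotangentSpan, Submodule.restrictScalars_span _ _ Ideal.Quotient.mk_surjective,
    Submodule.map_span, ← Set.range_comp, Function.comp_def]

lemma toCotangent_mem_cotangentSpan_iff (w : ι → g) (f : g) :
    g.toCotangent f ∈ cotangentSpan w ↔
      (f : O) ∈ g ^ 2 ⊔ Ideal.span (Set.range fun i => (w i : O)) := by
  have hmap : (Submodule.span O (Set.range w) ⊔ LinearMap.ker g.toCotangent).map g.subtype =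
      g ^ 2 ⊔ Ideal.span (Set.range fun i => (w i : O)) := by
    rw [Submodule.map_sup, Ideal.map_toCotangent_ker, Submodule.map_span, ← Set.range_comp,
      sup_comm]
    rfl
  rw [← Submodule.restrictScalars_mem O, cotangentSpan_restrictScalars, ← Submodule.mem_comap,
    Submodule.comap_map_eq, ← hmap]
  exact (g.subtype_injective.mem_set_image (a := f)).symm

lemma smul_toCotangent (a : O) (f : g) :
    (Ideal.Quotient.mk g a) • g.toCotangent f = g.toCotangent (a • f) := by
  rw [map_smul]; rfl

lemma toCotangent_mem_saturation_iff (w : ι → g) (f : g) :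
    g.toCotangent f ∈ saturation (cotangentSpan w) ↔
      (f : O) ∈ torsionSet (Ideal.span (Set.range fun i => (w i : O))) g := by
  simp only [mem_saturation_iff, torsionSet, Set.mem_ofPred_eq, f.2, true_and,
    Ideal.Quotient.mk_surjective.exists, smul_toCotangent, toCotangent_mem_cotangentSpan_iff,
    Submodule.coe_smul, smul_eq_mul]

end ConormalModule

section Derivations

variable {k O ι : Type*} [CommRing k] [CommRing O] [Algebra k O] {g : Ideal O}

lemma derivation_apply_mem_of_mem_sq (D : Derivation k O O) {f : O} (hf : f ∈ g ^ 2) :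
    D f ∈ g := by
  rw [sq] at hf
  induction hf using Submodule.mul_induction_on' with
  | mem_mul_mem a ha b hb =>
    rw [Derivation.leibniz]
    exact add_mem (Ideal.mul_mem_right _ _ ha) (Ideal.mul_mem_right _ _ hb)
  | add a _ b _ ha hb => rw [map_add]; exact add_mem ha hb

lemma mk_derivation_mul_of_mem (D : Derivation k O O) (a : O) {f : O} (hf : f ∈ g) :
    Ideal.Quotient.mk g (D (a * f)) = Ideal.Quotient.mk g a * Ideal.Quotient.mk g (D f) := by
  simp [Ideal.Quotient.eq_zero_iff_mem.mpr hf]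

lemma torsionSet_subset_primitiveIdeal (k : Type*) [CommRing k] [Algebra k O] {h : Ideal O}
    (hle : h ≤ g) : torsionSet h g ⊆ primitiveIdeal k h g := by
  rintro f ⟨hf, β, hβ, hβf⟩
  refine ⟨hf, fun D hD => ?_⟩
  have hmem : D (β * f) ∈ g := by
    obtain ⟨q, hq, r, hr, hqr⟩ := Submodule.mem_sup.mp hβf
    rw [← hqr, map_add]
    exact add_mem (derivation_apply_mem_of_mem_sq D hq) (hle (hD r hr))
  rw [← Ideal.Quotient.eq_zero_iff_mem, mk_derivation_mul_of_mem D β hf] at hmem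
  exact Ideal.Quotient.eq_zero_iff_mem.mp ((mul_left_mem_nonZeroDivisors_eq_zero_iff hβ).mp hmem)

lemma preservesIdeal_span_of_forall_eq_zero {hs : ι → O} {D : Derivation k O O}
    (hD : ∀ i, D (hs i) = 0) : PreservesIdeal (Ideal.span (Set.range hs)) D := by
  intro x hx
  induction hx using Submodule.span_induction with
  | mem x hx =>
    obtain ⟨i, rfl⟩ := hx
    rw [hD]
    exact zero_mem _
  | zero => rw [map_zero]; exact zero_mem _
  | add a b _ _ ha hb => rw [map_add]; exact add_mem ha hb
  | smul a x hx ih =>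
    rw [smul_eq_mul, Derivation.leibniz]
    exact add_mem (Ideal.mul_mem_left _ _ ih) (Ideal.mul_mem_right _ _ hx)

lemma linearIndependent_toCotangent_of_dual [Finite ι] [DecidableEq ι] {y : ι → g}
    {D : ι → Derivation k O O}
    (hD : ∀ i j, Ideal.Quotient.mk g (D i (y j)) = if i = j then 1 else 0) :
    LinearIndependent (O ⧸ g) fun j => g.toCotangent (y j) := by
  have := Fintype.ofFinite ι
  rw [Fintype.linearIndependent_iff]
  intro c hc i
  choose a ha using fun j => Ideal.Quotient.mk_surjective (c j)
  have hsq : g.toCotangent (∑ j, a j • y j) = 0 := by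
    simpa only [map_sum, ← smul_toCotangent, ha] using hc
  have := derivation_apply_mem_of_mem_sq (D i) ((g.toCotangent_eq_zero _).mp hsq)
  rw [← Ideal.Quotient.eq_zero_iff_mem, Submodule.coe_sum, map_sum, map_sum] at this
  simpa [mk_derivation_mul_of_mem, hD, ha, -Derivation.leibniz] using this

/-- Every `O ⧸ g`-linear functional on `g / g²` is induced by a derivation of `O`. -/
def CotangentFunctionalsLift (k : Type*) [CommRing k] [Algebra k O] (g : Ideal O) : Prop :=
  ∀ φ : Module.Dual (O ⧸ g) g.Cotangent, ∃ D : Derivation k O O,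
    ∀ f : g, Ideal.Quotient.mk g (D f) = φ (g.toCotangent f)

variable [Fintype ι]

lemma derivation_sum_apply (D : ι → Derivation k O O) (f : O) :
    (∑ i, D i) f = ∑ i, D i f := by
  have hcoe := map_sum (Derivation.coeFnAddMonoidHom : Derivation k O O →+ O → O) D Finset.univ
  exact (congrFun hcoe f).trans (Finset.sum_apply _ _ _)

variable [DecidableEq ι]

/-- For derivations `Dₗ` and `E` and elements `hᵢ` with Jacobian matrix `B = (Dₗ hᵢ)`, the
derivation `det B • E - ∑ₗ (adj B · E h)ₗ • Dₗ`. By Cramer's rule it kills every `hᵢ`. -/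
noncomputable def determinantalDerivation (D : ι → Derivation k O O) (E : Derivation k O O)
    (hs : ι → O) : Derivation k O O :=
  (Matrix.of fun i l => D l (hs i)).det • E -
    ∑ l, ((Matrix.of fun i l => D l (hs i)).adjugate.mulVec fun i => E (hs i)) l • D l

lemma determinantalDerivation_apply (D : ι → Derivation k O O) (E : Derivation k O O)
    (hs : ι → O) (f : O) :
    determinantalDerivation D E hs f = (Matrix.of fun i l => D l (hs i)).det * E f -
      ∑ l, ((Matrix.of fun i l => D l (hs i)).adjugate.mulVec fun i => E (hs i)) l * D l f := by
  simp only [determinantalDerivation, Derivation.sub_apply, Derivation.smul_apply,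
    derivation_sum_apply, smul_eq_mul]

lemma determinantalDerivation_apply_self (D : ι → Derivation k O O) (E : Derivation k O O)
    (hs : ι → O) (i : ι) : determinantalDerivation D E hs (hs i) = 0 := by
  rw [determinantalDerivation_apply, sub_eq_zero]
  set B : Matrix ι ι O := Matrix.of fun i l => D l (hs i)
  have hcramer : B.mulVec (B.adjugate.mulVec fun i => E (hs i)) = B.det • fun i => E (hs i) := by
    rw [Matrix.mulVec_mulVec, Matrix.mul_adjugate, Matrix.smul_mulVec, Matrix.one_mulVec]
  calc B.det * E (hs i) = B.mulVec (B.adjugate.mulVec fun i => E (hs i)) i :=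
        (congrFun hcramer i).symm
    _ = _ := Finset.sum_congr rfl fun l _ => mul_comm _ _

lemma derivation_apply_mem_of_mem_primitiveIdeal [g.IsPrime] {D : ι → Derivation k O O}
    {E : Derivation k O O} {hs : ι → O} (hdet : (Matrix.of fun i l => D l (hs i)).det ∉ g)
    (hE : ∀ i, E (hs i) ∈ g) {f : O}
    (hf : f ∈ primitiveIdeal k (Ideal.span (Set.range hs)) g) : E f ∈ g := by
  have hmem := hf.2 _
    (preservesIdeal_span_of_forall_eq_zero (determinantalDerivation_apply_self D E hs))
  rw [determinantalDerivation_apply] at hmem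
  have hcorr : ∑ l, ((Matrix.of fun i l => D l (hs i)).adjugate.mulVec fun i => E (hs i)) l *
      D l f ∈ g := Ideal.sum_mem _ fun l _ => Ideal.mul_mem_right _ _
    (Ideal.sum_mem _ fun i _ => Ideal.mul_mem_left _ _ (hE i))
  exact (Ideal.IsPrime.mem_or_mem inferInstance
    ((Submodule.sub_mem_iff_left g hcorr).mp hmem)).resolve_left hdet

end Derivations

section AdaptedFamilies

variable {O : Type*} [CommRing O] {g : Ideal O} {n p : ℕ} {hpn : p ≤ n}

lemma sup_sq_sup_left (I J : Ideal O) : (I ⊔ J) ^ 2 ⊔ I = I ⊔ J ^ 2 := by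
  apply le_antisymm
  · refine sup_le ?_ le_sup_left
    rw [sq, Ideal.sup_mul, Ideal.mul_sup J I J, sq]
    exact sup_le (le_sup_of_le_left Ideal.mul_le_left)
      (sup_le (le_sup_of_le_left Ideal.mul_le_right) le_sup_right)
  · exact sup_le le_sup_right (le_sup_of_le_left (Ideal.pow_right_mono le_sup_right 2))

lemma span_range_eq_sup_tailFam (hpn : p ≤ n) (y : Fin n → O) :
    Ideal.span (Set.range y) = Ideal.span (Set.range fun i => y (Fin.castLE hpn i)) ⊔
      Ideal.span (Set.range (tailFam y p)) := by
  rw [← Ideal.span_union]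
  congr 1
  ext f
  constructor
  · rintro ⟨j, rfl⟩
    by_cases hj : p ≤ j
    · refine Or.inr ⟨⟨j - p, by omega⟩, ?_⟩
      simp only [tailFam, Nat.add_sub_cancel' hj]
    · exact Or.inl ⟨⟨j, by omega⟩, rfl⟩
  · rintro (⟨j, rfl⟩ | ⟨j, rfl⟩) <;> exact ⟨_, rfl⟩

/-- A family `y₁, …, yₙ` of generators of `g` adapted to `h₁, …, h_p ∈ g`: its classes form a
basis of `g / g²` over `O ⧸ g`, the first `p` of which span the saturation of the submodule
generated by the classes of the `hᵢ`. -/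
structure IsAdapted (hpn : p ≤ n) (hs : Fin p → g) (y : Fin n → g) : Prop where
  linearIndependent : LinearIndependent (O ⧸ g) fun j => g.toCotangent (y j)
  span_eq : Ideal.span (Set.range fun j => (y j : O)) = g
  saturation_eq : saturation (cotangentSpan hs) = cotangentSpan (y ∘ Fin.castLE hpn)

namespace IsAdapted

variable {hs : Fin p → g} {y : Fin n → g} (hy : IsAdapted hpn hs y)

include hy

lemma cotangentSpan_eq_top : cotangentSpan y = ⊤ := by
  refine eq_top_iff.mpr fun v _ => ?_
  obtain ⟨f, rfl⟩ := g.toCotangent_surjective v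
  rw [toCotangent_mem_cotangentSpan_iff, hy.span_eq]
  exact Ideal.mem_sup_right f.2

/-- The basis of `g / g²` formed by the classes of an adapted family. -/
noncomputable def basis : Module.Basis (Fin n) (O ⧸ g) g.Cotangent :=
  Module.Basis.mk hy.linearIndependent hy.cotangentSpan_eq_top.ge

lemma basis_apply (j : Fin n) : hy.basis j = g.toCotangent (y j) := Module.Basis.mk_apply _ _ _

lemma mem_cotangentSpan_comp_iff {ι : Type*} (e : ι → Fin n) {v : g.Cotangent} :
    v ∈ cotangentSpan (y ∘ e) ↔ ∀ k ∉ Set.range e, hy.basis.repr v k = 0 := by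
  rw [← mem_span_range_comp_iff_repr_eq_zero, cotangentSpan]
  simp only [Function.comp_def, hy.basis_apply]

lemma span_head_sup_span_tail :
    Ideal.span (Set.range fun i => (y (Fin.castLE hpn i) : O)) ⊔
      Ideal.span (Set.range (tailFam (fun j => (y j : O)) p)) = g :=
  (span_range_eq_sup_tailFam hpn fun j => (y j : O)).symm.trans hy.span_eq

lemma mem_torsionSet_iff (f : g) :
    (f : O) ∈ torsionSet (Ideal.span (Set.range fun i => (hs i : O))) g ↔
      g.toCotangent f ∈ cotangentSpan (y ∘ Fin.castLE hpn) := by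
  rw [← toCotangent_mem_saturation_iff, hy.saturation_eq]

lemma torsionSet_eq :
    torsionSet (Ideal.span (Set.range fun i => (hs i : O))) g =
      (g ^ 2 ⊔ Ideal.span (Set.range fun i => (y (Fin.castLE hpn i) : O)) : Ideal O) := by
  have hle : g ^ 2 ⊔ Ideal.span (Set.range fun i => (y (Fin.castLE hpn i) : O)) ≤ g :=
    sup_le (Ideal.pow_le_self two_ne_zero) (le_sup_left.trans hy.span_head_sup_span_tail.le)
  ext f
  refine ⟨fun hf => ?_, fun hf => ?_⟩
  · exact (toCotangent_mem_cotangentSpan_iff _ ⟨f, hf.1⟩).mp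
      ((hy.mem_torsionSet_iff ⟨f, hf.1⟩).mp hf)
  · exact (hy.mem_torsionSet_iff ⟨f, hle hf⟩).mpr
      ((toCotangent_mem_cotangentSpan_iff _ ⟨f, hle hf⟩).mpr hf)

lemma head_mem_torsionSet (i : Fin p) :
    (y (Fin.castLE hpn i) : O) ∈ torsionSet (Ideal.span (Set.range fun i => (hs i : O))) g := by
  rw [hy.torsionSet_eq]
  exact Ideal.mem_sup_right (Ideal.subset_span ⟨i, rfl⟩)

lemma exists_sub_sum_head_mem_sq {f : O}
    (hf : f ∈ torsionSet (Ideal.span (Set.range fun i => (hs i : O))) g) :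
    ∃ c : Fin p → O, f - ∑ i, c i * y (Fin.castLE hpn i) ∈ g ^ 2 := by
  rw [hy.torsionSet_eq, SetLike.mem_coe] at hf
  obtain ⟨q, hq, r, hr, rfl⟩ := Submodule.mem_sup.mp hf
  obtain ⟨c, rfl⟩ := Ideal.mem_span_range_iff_exists_fun.mp hr
  exact ⟨c, by rwa [add_sub_cancel_right]⟩

lemma exists_sub_sum_tail_mem_torsionSet {f : O} (hf : f ∈ g) :
    ∃ c : Fin (n - p) → O, f - ∑ j, c j * tailFam (fun j => (y j : O)) p j ∈
      torsionSet (Ideal.span (Set.range fun i => (hs i : O))) g := by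
  rw [hy.torsionSet_eq]
  obtain ⟨q, hq, r, hr, rfl⟩ := Submodule.mem_sup.mp (hy.span_head_sup_span_tail.ge hf)
  obtain ⟨c, rfl⟩ := Ideal.mem_span_range_iff_exists_fun.mp hr
  exact ⟨c, by rw [add_sub_cancel_right]; exact Ideal.mem_sup_right hq⟩

lemma mem_of_sum_tail_mem_torsionSet {c : Fin (n - p) → O}
    (hc : ∑ j, c j * tailFam (fun j => (y j : O)) p j ∈
      torsionSet (Ideal.span (Set.range fun i => (hs i : O))) g) (j : Fin (n - p)) : c j ∈ g := by
  let e : Fin (n - p) → Fin n := fun j => ⟨p + j, by omega⟩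
  have he : Function.Injective e := fun i j hij => by simpa [e, Fin.ext_iff] using hij
  have hrepr : g.toCotangent (∑ j, c j • y (e j)) =
      ∑ j, Ideal.Quotient.mk g (c j) • hy.basis (e j) := by
    simp only [map_sum, hy.basis_apply, smul_toCotangent]
  have hcoe : ((∑ j, c j • y (e j) : g) : O) = ∑ j, c j * tailFam (fun j => (y j : O)) p j := by
    simp [tailFam, e]
  rw [← hcoe, hy.mem_torsionSet_iff, hrepr, hy.mem_cotangentSpan_comp_iff] at hc
  have hj : e j ∉ Set.range (Fin.castLE hpn) := by
    rintro ⟨i, hi⟩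
    have := congrArg Fin.val hi
    simp only [Fin.val_castLE, e] at this
    omega
  simpa [Finsupp.single_apply, he.eq_iff, Ideal.Quotient.eq_zero_iff_mem] using hc (e j) hj

lemma coe_primitiveIdeal_eq_torsionSet {k : Type*} [CommRing k] [Algebra k O] [g.IsPrime]
    (hlift : CotangentFunctionalsLift k g)
    (hli : LinearIndependent (O ⧸ g) fun i => g.toCotangent (hs i)) :
    (primitiveIdeal k (Ideal.span (Set.range fun i => (hs i : O))) g : Set O) =
      torsionSet (Ideal.span (Set.range fun i => (hs i : O))) g := by
  have hle : Ideal.span (Set.range fun i => (hs i : O)) ≤ g := by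
    rw [Ideal.span_le]
    rintro _ ⟨i, rfl⟩
    exact (hs i).2
  have hmem : ∀ i, g.toCotangent (hs i) ∈ cotangentSpan (y ∘ Fin.castLE hpn) := fun i =>
    (hy.mem_torsionSet_iff _).mp <| (toCotangent_mem_saturation_iff hs _).mp <|
      le_saturation _ (Submodule.subset_span ⟨i, rfl⟩)
  simp only [hy.mem_cotangentSpan_comp_iff] at hmem
  choose D hD using fun j => hlift (hy.basis.coord j)
  have hdet : (Matrix.of fun i l => D (Fin.castLE hpn l) (hs i)).det ∉ g := by
    have hjac : (Ideal.Quotient.mk g).mapMatrix (Matrix.of fun i l => D (Fin.castLE hpn l) (hs i)) =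
        Matrix.of fun i l => hy.basis.repr (g.toCotangent (hs i)) (Fin.castLE hpn l) := by
      ext i l
      exact hD _ _
    rw [← Ideal.Quotient.eq_zero_iff_mem, RingHom.map_det, hjac]
    exact det_repr_ne_zero hy.basis hli fun i =>
      (mem_span_range_comp_iff_repr_eq_zero _ _).mpr (hmem i)
  refine Set.Subset.antisymm (fun f hf => ?_) (torsionSet_subset_primitiveIdeal k hle)
  refine (hy.mem_torsionSet_iff ⟨f, hf.1⟩).mpr <|
    (hy.mem_cotangentSpan_comp_iff _).mpr fun j hj => ?_
  have hDj : ∀ i, D j (hs i) ∈ g := fun i => by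
    rw [← Ideal.Quotient.eq_zero_iff_mem, hD]
    exact hmem i j hj
  rw [← hy.basis.coord_apply, ← hD, Ideal.Quotient.eq_zero_iff_mem]
  exact derivation_apply_mem_of_mem_primitiveIdeal hdet hDj hf

lemma primitiveIdeal_eq {k : Type*} [CommRing k] [Algebra k O] [g.IsPrime]
    (hlift : CotangentFunctionalsLift k g)
    (hli : LinearIndependent (O ⧸ g) fun i => g.toCotangent (hs i)) :
    primitiveIdeal k (Ideal.span (Set.range fun i => (hs i : O))) g =
      Ideal.span (Set.range fun i => (y (Fin.castLE hpn i) : O)) ⊔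
        Ideal.span (Set.range (tailFam (fun j => (y j : O)) p)) ^ 2 := by
  rw [← sup_sq_sup_left, hy.span_head_sup_span_tail]
  exact SetLike.coe_injective <|
    (hy.coe_primitiveIdeal_eq_torsionSet hlift hli).trans hy.torsionSet_eq

end IsAdapted

end AdaptedFamilies

section RegularLocalization

open RingTheory.Sequence
open scoped Pointwise

variable {O : Type*} [CommRing O]

lemma ofList_ofFn {p : ℕ} (r : Fin p → O) :
    Ideal.ofList (List.ofFn r) = Ideal.span (Set.range r) := by
  simp only [Ideal.ofList, List.mem_ofFn, Set.range]

lemma exists_finset_forall_mul_mem_span {Q : Ideal O} [Q.IsPrime]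
    {s : Finset (Localization.AtPrime Q)}
    (hs : Ideal.span (s : Set (Localization.AtPrime Q)) =
      IsLocalRing.maximalIdeal (Localization.AtPrime Q)) :
    ∃ t : Finset O, t.card = s.card ∧ ↑t ⊆ (Q : Set O) ∧
      ∀ y ∈ Q, ∃ c ∉ Q, c * y ∈ Ideal.span (t : Set O) := by
  classical
  obtain ⟨u, t, hcard, himage⟩ : ∃ (u : Q.primeCompl) (t : Finset O), t.card = s.card ∧
      algebraMap O (Localization.AtPrime Q) '' t =
        algebraMap O (Localization.AtPrime Q) u • (s : Set (Localization.AtPrime Q)) :=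
    ⟨_, _, IsLocalization.card_finsetIntegerMultiple _ _,
      (IsLocalization.finsetIntegerMultiple_image _ _).trans
        (Set.image_congr fun x _ => (algebraMap_smul (Localization.AtPrime Q) _ x).symm)⟩
  have ht : (Ideal.span (t : Set O)).map (algebraMap O (Localization.AtPrime Q)) =
      IsLocalRing.maximalIdeal (Localization.AtPrime Q) := by
    rw [← hs, Ideal.map_span, himage]
    exact Submodule.span_smul_eq_of_isUnit _ _ (IsLocalization.map_units _ u)
  refine ⟨t, hcard, fun a ha => ?_, fun y hy => ?_⟩
  · rw [SetLike.mem_coe,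
      ← IsLocalization.AtPrime.to_map_mem_maximal_iff (Localization.AtPrime Q) Q, ← ht]
    exact Ideal.mem_map_of_mem _ (Ideal.subset_span ha)
  · rw [← IsLocalization.AtPrime.to_map_mem_maximal_iff (Localization.AtPrime Q) Q, ← ht,
      IsLocalization.algebraMap_mem_map_algebraMap_iff Q.primeCompl] at hy
    exact hy

lemma ringKrullDim_localization_add_length_le [IsNoetherianRing O] {rs : List O}
    (hreg : IsWeaklyRegular O rs) (Q : Ideal (O ⧸ Ideal.ofList rs)) [Q.IsPrime] :
    ringKrullDim (Localization.AtPrime Q) + rs.length ≤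
      (Q.comap (Ideal.Quotient.mk (Ideal.ofList rs))).height := by
  let P := Q.comap (Ideal.Quotient.mk (Ideal.ofList rs))
  have hmem : ∀ r ∈ rs, r ∈ P := fun r hr => by
    rw [Ideal.mem_comap,
      Ideal.Quotient.eq_zero_iff_mem.mpr (Ideal.subset_span (s := {r | r ∈ rs}) hr)]
    exact zero_mem Q
  have hdim := ringKrullDim_add_length_eq_ringKrullDim_of_isRegular _
    (hreg.isRegular_of_isLocalization_of_mem (Localization.AtPrime P) P hmem)
  rw [IsLocalization.AtPrime.ringKrullDim_eq_height P (Localization.AtPrime P),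
    List.length_map] at hdim
  rw [← hdim]
  gcongr
  let φ := Localization.localRingHom P Q (Ideal.Quotient.mk (Ideal.ofList rs)) rfl
  have hker : Ideal.ofList (rs.map (algebraMap O (Localization.AtPrime P))) ≤ RingHom.ker φ := by
    rw [← Ideal.map_ofList, Ideal.map_le_iff_le_comap]
    intro x hx
    rw [Ideal.mem_comap, RingHom.mem_ker, Localization.localRingHom_to_map,
      Ideal.Quotient.eq_zero_iff_mem.mpr hx, map_zero]
  exact ringKrullDim_le_of_surjective (Ideal.Quotient.lift _ φ hker)
    (Ideal.Quotient.lift_surjective_of_surjective _ hker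
      (RingHom.surjective_localRingHom_of_surjective _ Ideal.Quotient.mk_surjective Q))

lemma exists_finset_card_add_length_le_height [IsNoetherianRing O] {rs : List O}
    (hrs : IsWeaklyRegular O rs) {P : Ideal O} [P.IsPrime] (hle : Ideal.ofList rs ≤ P)
    (hreg : regularAtImage (Ideal.ofList rs) P) :
    ∃ t : Finset O, (t.card + rs.length : ℕ) ≤ P.height ∧ ↑t ⊆ (P : Set O) ∧
      ∀ y ∈ P, ∃ c ∉ P, c * y ∈ Ideal.span (t : Set O) ⊔ Ideal.ofList rs := by
  classical
  set mk := Ideal.Quotient.mk (Ideal.ofList rs)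
  have hcomap : (P.map mk).comap mk = P := by rw [Ideal.comap_map_mk hle]
  have hmem (x : O) : mk x ∈ P.map mk ↔ x ∈ P := by rw [← Ideal.mem_comap, hcomap]
  have hP : (P.map mk).IsPrime :=
    Ideal.map_isPrime_of_surjective Ideal.Quotient.mk_surjective (by rwa [Ideal.mk_ker])
  obtain ⟨-, -, s, hmax, hcard⟩ := hreg hP
  obtain ⟨t, hts, htQ, ht⟩ :=
    exists_finset_forall_mul_mem_span (IsLocalRing.eq_maximalIdeal hmax)
  have hdim := ringKrullDim_localization_add_length_le hrs (P.map mk)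
  rw [← hcard, ← hts, hcomap] at hdim
  obtain ⟨t', ht', ht'card⟩ : ∃ t' : Finset O, t'.image mk = t ∧ t'.card = t.card := by
    refine ⟨t.image (Function.surjInv Ideal.Quotient.mk_surjective), ?_,
      Finset.card_image_of_injective _ (Function.injective_surjInv _)⟩
    simp [Finset.image_image, mk, Function.comp_def, Function.surjInv_eq]
  refine ⟨t', ?_, fun a ha => ?_, fun y hy => ?_⟩
  · rw [ht'card]
    exact_mod_cast hdim
  · exact (hmem a).mp (htQ (ht' ▸ Finset.mem_image_of_mem mk ha))
  · obtain ⟨c, hc, hcy⟩ := ht _ ((hmem y).mpr hy)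
    obtain ⟨c, rfl⟩ := Ideal.Quotient.mk_surjective c
    refine ⟨c, fun hcP => hc ((hmem c).mpr hcP), ?_⟩
    rwa [← Ideal.mem_quotient_iff_mem_sup, Ideal.map_span, ← Finset.coe_image, ht', map_mul]

lemma linearIndependent_toCotangent_of_regularAtImage [IsNoetherianRing O] {g : Ideal O}
    [g.IsPrime] {p : ℕ} {hs : Fin p → g}
    (hhs : IsWeaklyRegular O (List.ofFn fun i => (hs i : O)))
    (hreg : regularAtImage (Ideal.span (Set.range fun i => (hs i : O))) g)
    (hheight : g.height ≤ Module.finrank (O ⧸ g) g.Cotangent) :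
    LinearIndependent (O ⧸ g) fun i => g.toCotangent (hs i) := by
  have hofList := ofList_ofFn fun i => (hs i : O)
  have hle : Ideal.span (Set.range fun i => (hs i : O)) ≤ g := by
    rw [Ideal.span_le]
    rintro _ ⟨i, rfl⟩
    exact (hs i).2
  obtain ⟨t, hcard, htg, ht⟩ :=
    exists_finset_card_add_length_le_height hhs (hofList ▸ hle) (hofList ▸ hreg)
  let v : t ⊕ Fin p → g := Sum.elim (fun a => ⟨a, htg a.2⟩) hs
  have hspan : Ideal.span (Set.range fun i => (v i : O)) =
      Ideal.span (t : Set O) ⊔ Ideal.span (Set.range fun i => (hs i : O)) := by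
    rw [← Ideal.span_union]
    congr 1
    ext a
    simp [v]
  have hsat : saturation (cotangentSpan v) = ⊤ := by
    refine eq_top_iff.mpr fun w _ => ?_
    obtain ⟨f, rfl⟩ := g.toCotangent_surjective w
    obtain ⟨c, hc, hcf⟩ := ht f f.2
    rw [toCotangent_mem_saturation_iff, hspan]
    refine ⟨f.2, c, mem_nonZeroDivisors_of_ne_zero ?_, Ideal.mem_sup_right (hofList ▸ hcf)⟩
    rwa [Ne, Ideal.Quotient.eq_zero_iff_mem]
  have hcard' : Fintype.card (t ⊕ Fin p) ≤ Module.finrank (O ⧸ g) g.Cotangent := by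
    rw [List.length_ofFn] at hcard
    rw [Fintype.card_sum, Fintype.card_coe, Fintype.card_fin]
    exact_mod_cast hcard.trans hheight
  exact (linearIndependent_of_saturation_eq_top hsat hcard').comp Sum.inr Sum.inr_injective

end RegularLocalization

section CoordinateLine

open MvPolynomial RingTheory.Sequence

variable {R : Type*} [CommRing R] {n : ℕ}

variable (R n) in
/-- The ideal `(X₁, …, Xₙ)` of the first coordinate axis in `R[X₀, …, Xₙ]`. -/
noncomputable def lineIdeal : Ideal (MvPolynomial (Fin (n + 1)) R) :=
  Ideal.span (Set.range fun i : Fin n => X i.succ)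

variable (R n) in
/-- The retraction of `R[X₀, …, Xₙ]` onto `R[X₀]` that sends `X₁, …, Xₙ` to `0`. -/
noncomputable def lineRetraction :
    MvPolynomial (Fin (n + 1)) R →ₐ[R] MvPolynomial (Fin (n + 1)) R :=
  aeval (Fin.cons (X 0) 0)

lemma X_succ_mem_lineIdeal (j : Fin n) : X j.succ ∈ lineIdeal R n := Ideal.subset_span ⟨j, rfl⟩

lemma mk_lineRetraction (f : MvPolynomial (Fin (n + 1)) R) :
    Ideal.Quotient.mk (lineIdeal R n) (lineRetraction R n f) = Ideal.Quotient.mk _ f := by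
  suffices (Ideal.Quotient.mkₐ R (lineIdeal R n)).comp (lineRetraction R n) =
      Ideal.Quotient.mkₐ R (lineIdeal R n) from DFunLike.congr_fun this f
  ext i
  cases i using Fin.cases with
  | zero => simp [lineRetraction]
  | succ j =>
    simpa [lineRetraction] using
      (Ideal.Quotient.eq_zero_iff_mem.mpr (X_succ_mem_lineIdeal (R := R) j)).symm

lemma ker_lineRetraction : RingHom.ker (lineRetraction R n) = lineIdeal R n := by
  apply le_antisymm
  · intro f hf
    rw [← Ideal.Quotient.eq_zero_iff_mem, ← mk_lineRetraction, (RingHom.mem_ker).mp hf, map_zero]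
  · rw [lineIdeal, Ideal.span_le]
    rintro _ ⟨j, rfl⟩
    simp [lineRetraction]

instance [IsDomain R] : (lineIdeal R n).IsPrime :=
  ker_lineRetraction (R := R) (n := n) ▸ RingHom.ker_isPrime _

instance {K : Type*} [Field K] :
    IsPrincipalIdealRing (MvPolynomial (Fin (n + 1)) K ⧸ lineIdeal K n) := by
  let φ : Polynomial K →ₐ[K] MvPolynomial (Fin (n + 1)) K ⧸ lineIdeal K n :=
    Polynomial.aeval (Ideal.Quotient.mk _ (X 0))
  have hφ : φ.comp (aeval (Fin.cons Polynomial.X 0)) = Ideal.Quotient.mkₐ K (lineIdeal K n) := by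
    ext i
    cases i using Fin.cases with
    | zero => simp [φ]
    | succ j => simpa using (Ideal.Quotient.eq_zero_iff_mem.mpr (X_succ_mem_lineIdeal j)).symm
  refine IsPrincipalIdealRing.of_surjective φ fun a => ?_
  obtain ⟨f, rfl⟩ := Ideal.Quotient.mk_surjective a
  exact ⟨_, DFunLike.congr_fun hφ f⟩

lemma lineIdeal_ne_top [Nontrivial R] : lineIdeal R n ≠ ⊤ :=
  ker_lineRetraction (R := R) (n := n) ▸ RingHom.ker_ne_top _

lemma lineIdeal_ne_span_range_X [Nontrivial R] : lineIdeal R n ≠ Ideal.span (Set.range X) := by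
  intro h
  have hX : (X 0 : MvPolynomial (Fin (n + 1)) R) ∈ RingHom.ker (lineRetraction R n) := by
    rw [ker_lineRetraction, h]
    exact Ideal.subset_span ⟨0, rfl⟩
  simp [lineRetraction] at hX

variable (R n) in
/-- The coordinates `X₁, …, Xₙ`, as elements of the ideal they generate. -/
noncomputable def lineCoord (j : Fin n) : lineIdeal R n := ⟨X j.succ, X_succ_mem_lineIdeal j⟩

variable (R n) in
lemma linearIndependent_toCotangent_lineCoord :
    LinearIndependent (MvPolynomial (Fin (n + 1)) R ⧸ lineIdeal R n)
      fun j => (lineIdeal R n).toCotangent (lineCoord R n j) := by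
  classical
  refine linearIndependent_toCotangent_of_dual (D := fun i => pderiv (R := R) i.succ) fun i j => ?_
  by_cases hij : i = j
  · simp [lineCoord, hij]
  · simp [lineCoord, pderiv_X, Ne.symm hij, hij]

lemma cotangentSpan_lineCoord : cotangentSpan (lineCoord R n) = ⊤ := by
  refine eq_top_iff.mpr fun v _ => ?_
  obtain ⟨f, rfl⟩ := (lineIdeal R n).toCotangent_surjective v
  exact (toCotangent_mem_cotangentSpan_iff _ _).mpr (Ideal.mem_sup_right f.2)

variable (R n) in
/-- The basis of `g / g²` given by the coordinates, where `g` is the ideal of a coordinate axis. -/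
noncomputable def lineBasis : Module.Basis (Fin n)
    (MvPolynomial (Fin (n + 1)) R ⧸ lineIdeal R n) (lineIdeal R n).Cotangent :=
  Module.Basis.mk (linearIndependent_toCotangent_lineCoord R n) cotangentSpan_lineCoord.ge

lemma lineBasis_apply (j : Fin n) :
    lineBasis R n j = (lineIdeal R n).toCotangent (lineCoord R n j) := Module.Basis.mk_apply _ _ _

lemma height_lineIdeal_le [IsDomain R] [IsNoetherianRing R] : (lineIdeal R n).height ≤
    Module.finrank (MvPolynomial (Fin (n + 1)) R ⧸ lineIdeal R n) (lineIdeal R n).Cotangent := by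
  rw [Module.finrank_eq_card_basis (lineBasis R n), Fintype.card_fin]
  have hmin : lineIdeal R n ∈ (lineIdeal R n).minimalPrimes := by
    rw [Ideal.minimalPrimes_eq_subsingleton_self, Set.mem_singleton_iff]
  refine (Ideal.height_le_card_of_mem_minimalPrimes_span (Set.finite_range _) hmin).trans ?_
  exact_mod_cast (Finite.card_range_le _).trans_eq (Nat.card_fin n)

lemma cotangentFunctionalsLift_lineIdeal : CotangentFunctionalsLift R (lineIdeal R n) := by
  intro φ
  choose u hu using fun j : Fin n => Ideal.Quotient.mk_surjective (φ (lineBasis R n j))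
  let D : Derivation R (MvPolynomial (Fin (n + 1)) R) (MvPolynomial (Fin (n + 1)) R) :=
    mkDerivation R (Fin.cons 0 u)
  refine ⟨D, fun f => ?_⟩
  obtain ⟨c, hc⟩ := Ideal.mem_span_range_iff_exists_fun.mp f.2
  have hf : f = ∑ j, c j • lineCoord R n j := Subtype.ext (by simpa [lineCoord] using hc.symm)
  calc Ideal.Quotient.mk (lineIdeal R n) (D f)
      = ∑ j, Ideal.Quotient.mk _ (c j) * Ideal.Quotient.mk _ (D (X j.succ)) := by
        rw [← hc, map_sum, map_sum]
        exact Finset.sum_congr rfl fun j _ => mk_derivation_mul_of_mem D _ (X_succ_mem_lineIdeal j)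
    _ = ∑ j, Ideal.Quotient.mk _ (c j) * φ (lineBasis R n j) := by simp [D, hu]
    _ = φ ((lineIdeal R n).toCotangent f) := by
        simp only [hf, map_sum, ← smul_toCotangent, ← lineBasis_apply]
        simp only [map_smul, smul_eq_mul]

variable (R n) in
/-- The section of the quotient map onto `R[X₀, …, Xₙ] ⧸ (X₁, …, Xₙ)` with image `R[X₀]`. -/
noncomputable def lineSection :
    MvPolynomial (Fin (n + 1)) R ⧸ lineIdeal R n →ₐ[R] MvPolynomial (Fin (n + 1)) R :=
  Ideal.Quotient.liftₐ _ (lineRetraction R n) fun f hf => by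
    rwa [← RingHom.mem_ker, ker_lineRetraction]

lemma mk_lineSection (a : MvPolynomial (Fin (n + 1)) R ⧸ lineIdeal R n) :
    Ideal.Quotient.mk _ (lineSection R n a) = a := by
  obtain ⟨f, rfl⟩ := Ideal.Quotient.mk_surjective a
  exact mk_lineRetraction f

/-- The substitution in `R[X₀, …, Xₙ]` that fixes `X₀` and sends `Xⱼ` to the linear form
`∑ᵢ Aᵢⱼ Xᵢ`, for a matrix `A` over the quotient by `(X₁, …, Xₙ)`, identified with `R[X₀]`. -/
noncomputable def linearSubst
    (A : Matrix (Fin n) (Fin n) (MvPolynomial (Fin (n + 1)) R ⧸ lineIdeal R n)) :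
    MvPolynomial (Fin (n + 1)) R →ₐ[R] MvPolynomial (Fin (n + 1)) R :=
  aeval (Fin.cons (X 0) fun j => ∑ i, lineSection R n (A i j) * X i.succ)

section LinearSubst

variable (A B : Matrix (Fin n) (Fin n) (MvPolynomial (Fin (n + 1)) R ⧸ lineIdeal R n))

lemma linearSubst_X_zero : linearSubst A (X 0) = X 0 := by simp [linearSubst]

lemma linearSubst_X_succ (j : Fin n) :
    linearSubst A (X j.succ) = ∑ i, lineSection R n (A i j) * X i.succ := by simp [linearSubst]

lemma linearSubst_lineSection (a : MvPolynomial (Fin (n + 1)) R ⧸ lineIdeal R n) :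
    linearSubst A (lineSection R n a) = lineSection R n a := by
  obtain ⟨f, rfl⟩ := Ideal.Quotient.mk_surjective a
  suffices (linearSubst A).comp (lineRetraction R n) = lineRetraction R n from
    DFunLike.congr_fun this f
  ext i : 1
  cases i using Fin.cases <;> simp [lineRetraction, linearSubst_X_zero]

lemma linearSubst_comp : (linearSubst A).comp (linearSubst B) = linearSubst (A * B) := by
  ext i : 1
  cases i using Fin.cases with
  | zero => simp [linearSubst_X_zero]
  | succ j =>
    simp only [AlgHom.comp_apply, linearSubst_X_succ, map_sum, map_mul, linearSubst_lineSection,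
      Matrix.mul_apply, Finset.mul_sum, Finset.sum_mul]
    rw [Finset.sum_comm]
    exact Finset.sum_congr rfl fun i _ => Finset.sum_congr rfl fun l _ => by ring

variable (R n) in
lemma linearSubst_one :
    linearSubst (1 : Matrix (Fin n) (Fin n) (MvPolynomial (Fin (n + 1)) R ⧸ lineIdeal R n)) =
      AlgHom.id R _ := by
  ext i : 1
  cases i using Fin.cases <;> simp [linearSubst_X_zero, linearSubst_X_succ, Matrix.one_apply]

variable {A B}

/-- The automorphism given by the substitution by an invertible matrix. -/
noncomputable def linearSubstEquiv (hAB : A * B = 1) (hBA : B * A = 1) :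
    MvPolynomial (Fin (n + 1)) R ≃ₐ[R] MvPolynomial (Fin (n + 1)) R :=
  AlgEquiv.ofAlgHom (linearSubst A) (linearSubst B)
    (by rw [linearSubst_comp, hAB, linearSubst_one])
    (by rw [linearSubst_comp, hBA, linearSubst_one])

lemma map_linearSubst_lineIdeal (hAB : A * B = 1) :
    (lineIdeal R n).map (linearSubst A) = lineIdeal R n := by
  have hle (C : Matrix (Fin n) (Fin n) (MvPolynomial (Fin (n + 1)) R ⧸ lineIdeal R n)) :
      (lineIdeal R n).map (linearSubst C) ≤ lineIdeal R n := by
    conv_lhs => rw [lineIdeal]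
    rw [Ideal.map_span, Ideal.span_le]
    rintro _ ⟨_, ⟨j, rfl⟩, rfl⟩
    rw [linearSubst_X_succ]
    exact Ideal.sum_mem _ fun i _ => Ideal.mul_mem_left _ _ (X_succ_mem_lineIdeal i)
  refine le_antisymm (hle A) ?_
  calc lineIdeal R n = ((lineIdeal R n).map (linearSubst B)).map (linearSubst A) := by
        rw [Ideal.map_mapₐ, linearSubst_comp, hAB, linearSubst_one]
        exact (Ideal.map_id _).symm
    _ ≤ (lineIdeal R n).map (linearSubst A) := Ideal.map_mono (hle B)

end LinearSubst

lemma mem_span_X_image_of_X_mul_mem {σ : Type*} {s : Set σ} {i : σ} (hi : i ∉ s)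
    {f : MvPolynomial σ R} (hf : X i * f ∈ Ideal.span (X '' s)) :
    f ∈ Ideal.span (X '' s : Set (MvPolynomial σ R)) := by
  rw [mem_ideal_span_X_image] at hf ⊢
  intro m hm
  obtain ⟨j, hj, hmj⟩ := hf (Finsupp.single i 1 + m) (by simpa [coeff_X_mul] using hm)
  have hij : i ≠ j := fun h => hi (h ▸ hj)
  exact ⟨j, hj, by simpa [Finsupp.single_eq_of_ne' hij] using hmj⟩

lemma isWeaklyRegular_ofFn_X {σ : Type*} {v : Fin n → σ} (hv : Function.Injective v) :
    IsWeaklyRegular (MvPolynomial σ R) (List.ofFn fun j => (X (v j) : MvPolynomial σ R)) := by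
  refine ⟨fun i hi => ?_⟩
  have hi' : i < n := by simpa using hi
  have hspan : Ideal.ofList ((List.ofFn fun j => (X (v j) : MvPolynomial σ R)).take i) =
      Ideal.span (X '' (v '' {j | (j : ℕ) < i})) := by
    rw [Ideal.ofList, Set.image_image]
    congr 1
    ext f
    simp only [Set.mem_ofPred_eq, List.mem_take_iff_getElem, List.length_ofFn, List.getElem_ofFn,
      Set.mem_image]
    constructor
    · rintro ⟨j, hj, rfl⟩
      exact ⟨⟨j, by omega⟩, show j < i by omega, rfl⟩
    · rintro ⟨j, hj, rfl⟩
      exact ⟨j, lt_min hj j.2, rfl⟩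
  rw [isSMulRegular_quotient_iff_mem_of_smul_mem, hspan, List.getElem_ofFn, smul_eq_mul,
    Ideal.mul_top]
  refine fun f hf => mem_span_X_image_of_X_mul_mem (i := v ⟨i, hi'⟩) ?_ hf
  rintro ⟨j, hj, hji⟩
  exact absurd (congrArg Fin.val (hv hji)) (ne_of_lt hj)

lemma isWeaklyRegular_ofFn_map {S : Type*} [CommRing S] (e : R ≃+* S)
    {r : Fin n → R} (hr : IsWeaklyRegular R (List.ofFn r)) :
    IsWeaklyRegular S (List.ofFn fun j => e (r j)) := by
  refine (AddEquiv.isWeaklyRegular_congr (e := e.toAddEquiv) ?_).mp hr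
  rw [List.forall₂_iff_get]
  refine ⟨by simp, fun i h₁ h₂ x => ?_⟩
  rw [List.get_ofFn, List.get_ofFn]
  exact map_mul e _ _

lemma exists_isRegular_lift [Nontrivial R] (b : Module.Basis (Fin n)
    (MvPolynomial (Fin (n + 1)) R ⧸ lineIdeal R n) (lineIdeal R n).Cotangent) :
    ∃ y : Fin n → lineIdeal R n,
      IsRegular (MvPolynomial (Fin (n + 1)) R)
        (List.ofFn fun j => (y j : MvPolynomial (Fin (n + 1)) R)) ∧
      Ideal.span (Set.range fun j => (y j : MvPolynomial (Fin (n + 1)) R)) = lineIdeal R n ∧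
      ∀ j, (lineIdeal R n).toCotangent (y j) = b j := by
  let A := (lineBasis R n).toMatrix b
  have hA : A * b.toMatrix (lineBasis R n) = 1 := (lineBasis R n).toMatrix_mul_toMatrix_flip b
  let e := linearSubstEquiv hA (b.toMatrix_mul_toMatrix_flip (lineBasis R n))
  let y (j : Fin n) : lineIdeal R n := ∑ i, lineSection R n (A i j) • lineCoord R n i
  have hy (j : Fin n) : (y j : MvPolynomial (Fin (n + 1)) R) = e (X j.succ) := by
    simp [y, e, linearSubstEquiv, linearSubst_X_succ, lineCoord]
  have hspan : Ideal.span (Set.range fun j : Fin n => e (X j.succ)) = lineIdeal R n := by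
    refine Eq.trans ?_ (map_linearSubst_lineIdeal hA)
    rw [lineIdeal, Ideal.map_span, ← Set.range_comp]
    rfl
  simp only [← hy] at hspan
  refine ⟨y, ⟨?_, ?_⟩, hspan, fun j => ?_⟩
  · simp only [hy]
    exact isWeaklyRegular_ofFn_map e.toRingEquiv (isWeaklyRegular_ofFn_X (Fin.succ_injective n))
  · rw [ofList_ofFn, hspan, smul_eq_mul, Ideal.mul_top]
    exact lineIdeal_ne_top.symm
  · simp only [y, map_sum, ← smul_toCotangent, mk_lineSection, ← lineBasis_apply]
    exact (lineBasis R n).sum_toMatrix_smul_self b j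

end CoordinateLine

end RelativeConormal

open RingTheory.Sequence RelativeConormal in
theorem statement19_general {K : Type*} [Field K] {n p : ℕ} (hpn : p ≤ n)
    (g : Ideal (MvPolynomial (Fin (n + 1)) K))
    (hgdef : g = Ideal.span (Set.range fun i : Fin n => MvPolynomial.X i.succ))
    (h : Ideal (MvPolynomial (Fin (n + 1)) K)) (hle : h ≤ g)
    (hs : Fin p → MvPolynomial (Fin (n + 1)) K)
    (hhseq : IsWeaklyRegular (MvPolynomial (Fin (n + 1)) K) (List.ofFn hs))
    (hhgen : h = Ideal.span (Set.range hs))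
    (hreg : regularAtImage h g) :
    ∃ ys : Fin n → MvPolynomial (Fin (n + 1)) K,
      IsRegular (MvPolynomial (Fin (n + 1)) K) (List.ofFn ys) ∧
      g = Ideal.span (Set.range ys) ∧
      (∀ j : Fin p, ys (Fin.castLE hpn j) ∈ torsionSet h g) ∧
      (∀ f ∈ torsionSet h g, ∃ c : Fin p → MvPolynomial (Fin (n + 1)) K,
        f - ∑ j, c j * ys (Fin.castLE hpn j) ∈ g ^ 2 ⊔ h) ∧
      (∀ f ∈ g, ∃ c : Fin (n - p) → MvPolynomial (Fin (n + 1)) K,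
        f - ∑ j, c j * tailFam ys p j ∈ torsionSet h g) ∧
      (∀ c : Fin (n - p) → MvPolynomial (Fin (n + 1)) K,
        (∑ j, c j * tailFam ys p j) ∈ torsionSet h g → ∀ j, c j ∈ g) ∧
      primitiveIdeal K h g =
        Ideal.span (Set.range fun j : Fin p => ys (Fin.castLE hpn j)) ⊔
          (Ideal.span (Set.range (tailFam ys p))) ^ 2 := by
  obtain rfl : g = lineIdeal K n := hgdef
  subst hhgen
  lift hs to Fin p → lineIdeal K n using fun i => hle (Ideal.subset_span ⟨i, rfl⟩)
  have hli := linearIndependent_toCotangent_of_regularAtImage hhseq hreg height_lineIdeal_le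
  obtain ⟨b, hb⟩ := exists_basis_saturation_eq hpn (lineBasis K n) hli
  obtain ⟨y, hyreg, hyspan, hyb⟩ := exists_isRegular_lift b
  have hy : IsAdapted hpn hs y :=
    ⟨by simpa only [hyb] using b.linearIndependent, hyspan,
      hb.trans (by simp only [cotangentSpan, Function.comp_def, hyb])⟩
  exact ⟨fun j => y j, hyreg, hyspan.symm,
    hy.head_mem_torsionSet,
    fun f hf => (hy.exists_sub_sum_head_mem_sq hf).imp fun c hc => Ideal.mem_sup_left hc,
    fun f hf => hy.exists_sub_sum_tail_mem_torsionSet hf,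
    fun c hc => hy.mem_of_sum_tail_mem_torsionSet hc,
    hy.primitiveIdeal_eq cotangentFunctionalsLift_lineIdeal hli⟩

/-- Lines on a variety with isolated complete intersection singularity: for the line
`Σ = x`-axis defined by `g = (y₁, …, yₙ)` in `ℂ[x, y₁, …, yₙ]` lying on `X = V(h)` with
an isolated complete intersection singularity at the origin, there is a regular sequence
`y′₁, …, y′ₙ` generating `g` such that the images of `y′₁, …, y′_p` generate `T(M)`, the
images of `y′_{p+1}, …, y′ₙ` freely generate `N = M/T(M)` of rank `n - p`, and
`∫_h g = (y′₁, …, y′_p) + (y′_{p+1}, …, y′ₙ)²`. -/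
theorem statement19 {n : ℕ}
    (g : Ideal (MvPolynomial (Fin (n + 1)) ℂ))
    (hgdef : g = Ideal.span (Set.range fun i : Fin n => MvPolynomial.X i.succ))
    (h : Ideal (MvPolynomial (Fin (n + 1)) ℂ)) (hle : h ≤ g)
    {p : ℕ} (hpn : p ≤ n)
    (hs : Fin p → MvPolynomial (Fin (n + 1)) ℂ)
    (hhseq : RingTheory.Sequence.IsRegular (MvPolynomial (Fin (n + 1)) ℂ) (List.ofFn hs))
    (hhgen : h = Ideal.span (Set.range hs))
    (hiso : ∀ Q : Ideal (MvPolynomial (Fin (n + 1)) ℂ), Q.IsPrime → h ≤ Q →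
      Q ≠ Ideal.span (Set.range MvPolynomial.X) → regularAtImage h Q)
    (hsing : ¬ regularAtImage h (Ideal.span (Set.range MvPolynomial.X)) ∨ p < n + 1) :
    ∃ ys : Fin n → MvPolynomial (Fin (n + 1)) ℂ,
      RingTheory.Sequence.IsRegular (MvPolynomial (Fin (n + 1)) ℂ) (List.ofFn ys) ∧
      g = Ideal.span (Set.range ys) ∧
      (∀ j : Fin p, ys (Fin.castLE hpn j) ∈ torsionSet h g) ∧
      (∀ f ∈ torsionSet h g, ∃ c : Fin p → MvPolynomial (Fin (n + 1)) ℂ,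
        f - ∑ j, c j * ys (Fin.castLE hpn j) ∈ g ^ 2 ⊔ h) ∧
      (∀ f ∈ g, ∃ c : Fin (n - p) → MvPolynomial (Fin (n + 1)) ℂ,
        f - ∑ j, c j * tailFam ys p j ∈ torsionSet h g) ∧
      (∀ c : Fin (n - p) → MvPolynomial (Fin (n + 1)) ℂ,
        (∑ j, c j * tailFam ys p j) ∈ torsionSet h g → ∀ j, c j ∈ g) ∧
      primitiveIdeal ℂ h g =
        Ideal.span (Set.range fun j : Fin p => ys (Fin.castLE hpn j)) ⊔
          (Ideal.span (Set.range (tailFam ys p))) ^ 2 := by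
  obtain rfl : g = RelativeConormal.lineIdeal ℂ n := hgdef
  exact statement19_general hpn _ rfl h hle hs hhseq.toIsWeaklyRegular hhgen
    (hiso (RelativeConormal.lineIdeal ℂ n) inferInstance hle
      RelativeConormal.lineIdeal_ne_span_range_X)
end
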